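/- arXiv:math/0609644 — 2 statements merged into one kernel-verified Lean document; each statement's English description precedes it below -/
import Mathlib

section
/- For every Young diagram Y: |S_Y(213)| < |S_Y(123)| if and only if Y has an i-critical point with i ≥ 2 (i.e. there exists y < n with b(y+1) > b(y) and b(y) − y ≥ 2); and |S_Y(123)| < |S_Y(312)| if and only if Y has an i-critical point with i ≥ 3 (i.e. there exists y < n with b(y+1) > b(y) and b(y) − y ≥ 3). -/
/-!
The three numbers are compared in two independent ways.

*213 against 123.* Reflection in the antidiagonal preserves 123, the index of critical points and
properness, and turns 213 into 132, so it suffices to compare 132 with 123. Both are counted row by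
row from the bottom (`Gdp_eq`, `Hdp_eq`). Placing the lowest dot in column `k` of a row of length `m`
forces the remaining columns of that row to the right of `k` to be increasing (132) or decreasing
(123), so the state of the recursion is a set `D` of adjacent columns whose order is forced. The dot
may be placed at the first column of each maximal run of `D` for 132, and at the last column for 123;
otherwise the recursions agree. Passing from the first to the last column of a run leaves fewer forced
adjacencies, and the counts decrease in `D`. This gives the inequality (`GH_step`). It is strict as
soon as a run stops before the end of its row, which is what a critical point of index at least 2
makes possible (`Gdp_lt`); otherwise `D` is always a final segment of the row and the counts agree
(`GH_eq`).

*123 against 312.* First, 123 is as frequent as 321 in every diagram (`Hdp_eq_Ldp`). Both row-by-row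
recursions are evaluations of one linear functional `Lam` on polynomials: the state of the 123
recursion enters through the continuant of the path with edge set `D`, that of the 321 recursion
through a Chebyshev polynomial times a power of `X`.

Then 321 is compared with 312 column by column from the left, keeping a lower bound `y` for the first
entry (`LL`, `KK`). If the first two entries increase, deleting the first dot gives the same recursion
for both patterns (`KK_asc`, `LL_asc`). If they decrease, a 321-avoider has its lowest dot in column
`1`, and deleting it gives a smaller instance (`LL_desc`). For 312 let `T` be the set of values below
the first entry that lie in columns of the lowest row. The cyclic shift of `T` (`Phi`) maps the
transversals with lowest dot in column `1` that avoid 312 outside that column injectively to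
312-avoiders starting with a descent (`phi_forward`); hence there are at least as many 312-avoiders
as 321-avoiders (`LL_le_KK`). Without critical points of index at least 3 the map is onto
(`phi_backward_off`), so equality propagates through the recursion (`KK_eq_LL`); a critical point of
index at least 3 in the lowest row leaves an explicit permutation outside the image (`KK_desc_lt`),
and one in a higher row is reduced to this case (`LL_lt_KK`).
-/

open Equiv

/-- `π` is a transversal of the Young diagram with row lengths `b` (zero-indexed:
the row at height `h` has `b h` cells, i.e. column `i` (1-indexed `i+1`) lies in that row
iff `(i:ℕ)+1 ≤ b h`). -/
def IsTransversal {n : ℕ} (b : Fin n → ℕ) (π : Equiv.Perm (Fin n)) : Prop :=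
  ∀ i : Fin n, (i : ℕ) + 1 ≤ b (π i)

/-- The transversal `π` contains the pattern `τ` inside the Young diagram `b`:
there are columns `f 0 < f 1 < …` whose dots are in the relative order prescribed by `τ`
and all rows and columns through these dots intersect inside the diagram. -/
def ContainsIn {n k : ℕ} (b : Fin n → ℕ) (π : Equiv.Perm (Fin n))
    (τ : Equiv.Perm (Fin k)) : Prop :=
  ∃ f : Fin k → Fin n, StrictMono f ∧
    (∀ s t : Fin k, τ s < τ t ↔ π (f s) < π (f t)) ∧
    (∀ s t : Fin k, (f s : ℕ) + 1 ≤ b (π (f t)))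

/-- `|S_Y(τ)|`: the number of transversals of the Young diagram `b` avoiding `τ` in `Y`. -/
noncomputable def SYcard {n k : ℕ} (b : Fin n → ℕ) (τ : Equiv.Perm (Fin k)) : ℕ :=
  Nat.card {π : Equiv.Perm (Fin n) // IsTransversal b π ∧ ¬ ContainsIn b π τ}

/-- Classical pattern containment for permutations. -/
def ContainsPat {n k : ℕ} (π : Equiv.Perm (Fin n)) (τ : Equiv.Perm (Fin k)) : Prop :=
  ∃ f : Fin k → Fin n, StrictMono f ∧ ∀ s t : Fin k, τ s < τ t ↔ π (f s) < π (f t)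

/-- `|S_n(τ)|`: the number of permutations of length `n` avoiding `τ`. -/
noncomputable def SnCard (n : ℕ) {k : ℕ} (τ : Equiv.Perm (Fin k)) : ℕ :=
  Nat.card {π : Equiv.Perm (Fin n) // ¬ ContainsPat π τ}

def p123 : Equiv.Perm (Fin 3) := Equiv.refl _
def p213 : Equiv.Perm (Fin 3) :=
  ⟨![1, 0, 2], ![1, 0, 2], by intro x; fin_cases x <;> rfl, by intro x; fin_cases x <;> rfl⟩
def p312 : Equiv.Perm (Fin 3) :=
  ⟨![2, 0, 1], ![1, 2, 0], by intro x; fin_cases x <;> rfl, by intro x; fin_cases x <;> rfl⟩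
def p321 : Equiv.Perm (Fin 3) :=
  ⟨![2, 1, 0], ![2, 1, 0], by intro x; fin_cases x <;> rfl, by intro x; fin_cases x <;> rfl⟩

/-- `(σ|τ)`: the block sum with the block of `σ` before and entirely above the block of `τ`. -/
def blockSum {m k : ℕ} (σ : Equiv.Perm (Fin m)) (τ : Equiv.Perm (Fin k)) :
    Equiv.Perm (Fin (m + k)) :=
  finSumFinEquiv.symm.trans ((((Equiv.sumCongr σ τ).trans
    (Equiv.sumComm (Fin m) (Fin k))).trans finSumFinEquiv).trans
    (finCongr (Nat.add_comm k m)))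

/-- `|S_{↘Y}(τ)|`: avoiders whose two leftmost entries are decreasing. -/
noncomputable def SYcardLeftDesc {m k : ℕ} (b : Fin m → ℕ) (τ : Equiv.Perm (Fin k)) : ℕ :=
  Nat.card {π : Equiv.Perm (Fin m) // IsTransversal b π ∧ ¬ ContainsIn b π τ ∧
    ∀ i j : Fin m, (i : ℕ) = 0 → (j : ℕ) = 1 → π j < π i}

/-- `|S_{↗Y}(τ)|`: avoiders whose two leftmost entries are increasing. -/
noncomputable def SYcardLeftAsc {m k : ℕ} (b : Fin m → ℕ) (τ : Equiv.Perm (Fin k)) : ℕ :=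
  Nat.card {π : Equiv.Perm (Fin m) // IsTransversal b π ∧ ¬ ContainsIn b π τ ∧
    ∀ i j : Fin m, (i : ℕ) = 0 → (j : ℕ) = 1 → π i < π j}

/-- `|S^{↘}_Y(τ)|`: avoiders in which the value `m` occurs to the left of the value `m-1`. -/
noncomputable def SYcardTopDesc {m k : ℕ} (b : Fin m → ℕ) (τ : Equiv.Perm (Fin k)) : ℕ :=
  Nat.card {π : Equiv.Perm (Fin m) // IsTransversal b π ∧ ¬ ContainsIn b π τ ∧
    ∀ u v : Fin m, (u : ℕ) + 1 = m → (v : ℕ) + 2 = m → π⁻¹ u < π⁻¹ v}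

/-- `|S^{↗}_Y(τ)|`: avoiders in which the value `m-1` occurs to the left of the value `m`. -/
noncomputable def SYcardTopAsc {m k : ℕ} (b : Fin m → ℕ) (τ : Equiv.Perm (Fin k)) : ℕ :=
  Nat.card {π : Equiv.Perm (Fin m) // IsTransversal b π ∧ ¬ ContainsIn b π τ ∧
    ∀ u v : Fin m, (u : ℕ) + 1 = m → (v : ℕ) + 2 = m → π⁻¹ v < π⁻¹ u}

namespace ShapeWilf

open Finset

/-! ### Counting permutations and inserting a dot -/

open scoped Classical in
/-- The number of permutations of `Fin n` satisfying a property. -/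
noncomputable def cnt {n : ℕ} (P : Equiv.Perm (Fin n) → Prop) : ℕ :=
  (Finset.univ.filter P).card

theorem cnt_congr {n : ℕ} {P Q : Equiv.Perm (Fin n) → Prop} (h : ∀ π, P π ↔ Q π) :
    cnt P = cnt Q := by
  have : P = Q := funext fun π => propext (h π)
  rw [this]

theorem cnt_false {n : ℕ} {P : Equiv.Perm (Fin n) → Prop} (h : ∀ π, ¬ P π) : cnt P = 0 := by
  classical
  unfold cnt
  rw [Finset.card_eq_zero, Finset.filter_eq_empty_iff]
  exact fun π _ => h π

theorem cnt_le {n : ℕ} {P Q : Equiv.Perm (Fin n) → Prop} (f : Equiv.Perm (Fin n) → Equiv.Perm (Fin n))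
    (hf : ∀ π, P π → Q (f π)) (hi : ∀ π ρ, P π → P ρ → f π = f ρ → π = ρ) : cnt P ≤ cnt Q := by
  classical
  unfold cnt
  apply Finset.card_le_card_of_injOn f
  · intro π h
    simp only [Finset.coe_filter, Finset.mem_univ, true_and, Set.mem_ofPred_eq] at h ⊢
    exact hf π h
  · intro π h ρ h' e
    simp only [Finset.coe_filter, Finset.mem_univ, true_and, Set.mem_ofPred_eq] at h h'
    exact hi π ρ h h' e

theorem cnt_lt {n : ℕ} {P Q : Equiv.Perm (Fin n) → Prop} (f : Equiv.Perm (Fin n) → Equiv.Perm (Fin n))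
    (hf : ∀ π, P π → Q (f π)) (hi : ∀ π ρ, P π → P ρ → f π = f ρ → π = ρ)
    (ρ : Equiv.Perm (Fin n)) (hρ : Q ρ) (hne : ∀ π, P π → f π ≠ ρ) : cnt P < cnt Q := by
  classical
  have h1 : cnt P ≤ cnt (fun π => Q π ∧ π ≠ ρ) :=
    cnt_le f (fun π h => ⟨hf π h, hne π h⟩) hi
  refine lt_of_le_of_lt h1 ?_
  unfold cnt
  apply Finset.card_lt_card
  rw [Finset.ssubset_iff_of_subset]
  · exact ⟨ρ, by simpa using hρ, by simp⟩
  · intro π h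
    simp only [Finset.mem_filter, Finset.mem_univ, true_and] at h ⊢
    exact h.1

theorem cnt_split {n : ℕ} (P Q : Equiv.Perm (Fin n) → Prop) :
    cnt P = cnt (fun π => P π ∧ Q π) + cnt (fun π => P π ∧ ¬ Q π) := by
  classical
  unfold cnt
  rw [← Finset.card_filter_add_card_filter_not (s := Finset.univ.filter P) Q]
  congr 2 <;> (ext π; simp)

theorem cnt_fiber {n : ℕ} (P : Equiv.Perm (Fin n) → Prop) (g : Equiv.Perm (Fin n) → Fin n) :
    cnt P = ∑ y : Fin n, cnt (fun π => P π ∧ g π = y) := by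
  classical
  unfold cnt
  rw [Finset.card_eq_sum_card_fiberwise (f := g) (t := Finset.univ) (by intro x _; simp)]
  refine Finset.sum_congr rfl fun y _ => ?_
  congr 1
  ext π
  simp

theorem cnt_equiv {n m : ℕ} {P : Equiv.Perm (Fin n) → Prop} {Q : Equiv.Perm (Fin m) → Prop}
    (e : Equiv.Perm (Fin n) ≃ Equiv.Perm (Fin m)) (h : ∀ π, P π ↔ Q (e π)) : cnt P = cnt Q := by
  classical
  unfold cnt
  refine Finset.card_equiv e ?_
  intro π
  simp [h]

/-- Insert a dot in column `k` and row `y`: the permutation sending `k` to `y` and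
order-isomorphic to `σ` on the other columns and rows. -/
def ins {n : ℕ} (k y : Fin (n + 1)) (σ : Equiv.Perm (Fin n)) : Equiv.Perm (Fin (n + 1)) :=
  (finSuccEquiv' k).trans ((Equiv.optionCongr σ).trans (finSuccEquiv' y).symm)

@[simp] theorem ins_self {n : ℕ} (k y : Fin (n + 1)) (σ : Equiv.Perm (Fin n)) :
    ins k y σ k = y := by
  simp [ins]

@[simp] theorem ins_succAbove {n : ℕ} (k y : Fin (n + 1)) (σ : Equiv.Perm (Fin n)) (i : Fin n) :
    ins k y σ (k.succAbove i) = y.succAbove (σ i) := by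
  simp [ins]

theorem ins_injective {n : ℕ} (k y : Fin (n + 1)) : Function.Injective (ins (n := n) k y) := by
  intro σ σ' h
  ext1 i
  have := congrArg (fun π => π (k.succAbove i)) h
  simpa using this

theorem exists_ins {n : ℕ} (k y : Fin (n + 1)) (π : Equiv.Perm (Fin (n + 1))) (h : π k = y) :
    ∃ σ, ins k y σ = π := by
  refine ⟨Equiv.removeNone ((finSuccEquiv' k).symm.trans (π.trans (finSuccEquiv' y))), ?_⟩
  have hn : ((finSuccEquiv' k).symm.trans (π.trans (finSuccEquiv' y))) none = none := by
    simp [h]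
  unfold ins
  rw [Equiv.optionCongr, Equiv.coe_fn_injective.eq_iff.symm]
  funext i
  obtain rfl | ⟨j, rfl⟩ := Fin.eq_self_or_eq_succAbove k i
  · simp [h]
  · have hj : ((finSuccEquiv' k).symm.trans (π.trans (finSuccEquiv' y))) (some j) ≠ none := by
      intro hh
      have := ((finSuccEquiv' k).symm.trans (π.trans (finSuccEquiv' y))).injective (hh.trans hn.symm)
      simp at this
    have := Equiv.removeNone_some _ (Option.ne_none_iff_exists'.mp hj)
    simp only [Equiv.trans_apply, finSuccEquiv'_succAbove, Equiv.coe_fn_mk, Option.map_some]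
    rw [this]
    simp

theorem cnt_ins {n : ℕ} (k y : Fin (n + 1)) (P : Equiv.Perm (Fin (n + 1)) → Prop) :
    cnt (fun π => P π ∧ π k = y) = cnt (fun σ => P (ins k y σ)) := by
  classical
  unfold cnt
  symm
  refine Finset.card_bij (fun σ _ => ins k y σ) ?_ ?_ ?_
  · intro σ h
    simpa using h
  · intro σ _ σ' _ h
    exact ins_injective k y h
  · intro π h
    simp only [Finset.mem_filter, Finset.mem_univ, true_and] at h
    obtain ⟨σ, rfl⟩ := exists_ins k y π h.2
    exact ⟨σ, by simpa using h.1, rfl⟩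

theorem val_succAbove {n : ℕ} (k : Fin (n + 1)) (i : Fin n) :
    ((k.succAbove i : Fin (n + 1)) : ℕ) = if (i : ℕ) < k then (i : ℕ) else i + 1 := by
  unfold Fin.succAbove
  simp only [Fin.lt_def, Fin.val_castSucc]
  split_ifs <;> simp

theorem ne_cases {n : ℕ} (k i : Fin (n + 1)) (h : i ≠ k) : ∃ j, k.succAbove j = i :=
  Fin.exists_succAbove_eq h

/-! ### Row-by-row recursions for 123, 132 and 321 -/

/-- `π` is a transversal of the diagram with row lengths `B`. -/
def Tr {n : ℕ} (B : ℕ → ℕ) (π : Equiv.Perm (Fin n)) : Prop := ∀ i : Fin n, (i : ℕ) < B (π i)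

/-- Avoidance of `123` inside the diagram `B`. -/
def Av123 {n : ℕ} (B : ℕ → ℕ) (π : Equiv.Perm (Fin n)) : Prop :=
  ∀ i j k, i < j → j < k → π i < π j → π j < π k → ¬ (k : ℕ) < B (π i)

/-- Avoidance of `132` inside the diagram `B`. -/
def Av132 {n : ℕ} (B : ℕ → ℕ) (π : Equiv.Perm (Fin n)) : Prop :=
  ∀ i j k, i < j → j < k → π i < π k → π k < π j → ¬ (k : ℕ) < B (π i)

/-- Avoidance of `321`. In such a pattern the last dot is also the lowest, so for a transversal the
pattern always lies in the diagram and no shape condition is needed. -/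
def Av321 {n : ℕ} (π : Equiv.Perm (Fin n)) : Prop :=
  ∀ i j k, i < j → j < k → π k < π j → ¬ π j < π i

/-- `π` has a descent at every position in `D`. -/
def Dec {n : ℕ} (D : Set ℕ) (π : Equiv.Perm (Fin n)) : Prop :=
  ∀ x y : Fin n, (y : ℕ) = x + 1 → (x : ℕ) ∈ D → π y < π x

/-- `π` has an ascent at every position in `D`. -/
def Inc {n : ℕ} (D : Set ℕ) (π : Equiv.Perm (Fin n)) : Prop :=
  ∀ x y : Fin n, (y : ℕ) = x + 1 → (x : ℕ) ∈ D → π x < π y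

/-- The first `t` entries of `π` are increasing. -/
def IncUpTo {n : ℕ} (t : ℕ) (π : Equiv.Perm (Fin n)) : Prop :=
  ∀ i j : Fin n, i < j → (j : ℕ) < t → π i < π j

/-- The diagram left after deleting the lowest row and one of its columns. -/
def Bd (B : ℕ → ℕ) : ℕ → ℕ := fun i => B (i + 1) - 1

/-- The forced adjacencies after the dot of the lowest row (of length `m`) is removed from column
`k`: the old ones left of `k`, and all those among the columns `≥ k` of that row. -/
def Dn (D : Set ℕ) (m k : ℕ) : Set ℕ := {x | x ∈ D ∧ x + 1 < k} ∪ {x | k ≤ x ∧ x + 2 < m}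

theorem Bd_mono {B : ℕ → ℕ} (hB : Monotone B) : Monotone (Bd B) := fun _ _ h =>
  Nat.sub_le_sub_right (hB (Nat.succ_le_succ h)) 1

theorem shape_iff {n : ℕ} {B : ℕ → ℕ} (hB : Monotone B) (k : Fin (n + 1)) (hk : (k : ℕ) < B 0)
    (c : Fin n) (y : ℕ) : ((k.succAbove c : Fin (n + 1)) : ℕ) < B (y + 1) ↔ (c : ℕ) < Bd B y := by
  have := hB (Nat.zero_le (y + 1))
  rw [val_succAbove, Bd]
  split_ifs <;> omega

theorem ins0_val {n : ℕ} (k : Fin (n + 1)) (σ : Equiv.Perm (Fin n)) (c : Fin n) :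
    ((ins k 0 σ (k.succAbove c) : Fin (n + 1)) : ℕ) = σ c + 1 := by
  rw [ins_succAbove]; simp

theorem ins0_lt {n : ℕ} (k : Fin (n + 1)) (σ : Equiv.Perm (Fin n)) (c d : Fin n) :
    ins k 0 σ (k.succAbove c) < ins k 0 σ (k.succAbove d) ↔ σ c < σ d := by
  simp

theorem tr_ins {n : ℕ} {B : ℕ → ℕ} (hB : Monotone B) (k : Fin (n + 1)) (σ : Equiv.Perm (Fin n)) :
    Tr B (ins k 0 σ) ↔ (k : ℕ) < B 0 ∧ Tr (Bd B) σ := by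
  unfold Tr
  rw [Fin.forall_iff_succAbove k]
  simp only [ins_self, ins0_val, Fin.val_zero]
  constructor
  · rintro ⟨h, h'⟩
    exact ⟨h, fun i => (shape_iff hB k h i _).1 (h' i)⟩
  · rintro ⟨h, h'⟩
    exact ⟨h, fun i => (shape_iff hB k h i _).2 (h' i)⟩

/-- A transitive relation that holds between adjacent columns of an interval holds throughout
the interval. -/
theorem chain_rel {n : ℕ} (r : Fin n → Fin n → Prop) (ht : ∀ a b c, r a b → r b c → r a c)
    (a c : ℕ) (h : ∀ x y : Fin n, (y : ℕ) = x + 1 → a ≤ x → (y : ℕ) < c → r x y) :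
    ∀ i j : Fin n, a ≤ i → i < j → (j : ℕ) < c → r i j := by
  intro i j hai hij hjc
  obtain ⟨j, hj⟩ := j
  induction j with
  | zero => exact absurd hij (by simp [Fin.lt_def])
  | succ j ih =>
    simp only [Fin.lt_def] at hij
    rcases Nat.lt_or_ge i j with h1 | h1
    · exact ht _ _ _ (ih (by omega) (by simpa [Fin.lt_def] using h1) (by simp at hjc ⊢; omega))
        (h _ _ rfl (by simp; omega) hjc)
    · have : (i : ℕ) = j := by omega
      exact h _ _ (by simp [this]) hai hjc

theorem sA_lt {n : ℕ} (k : Fin (n + 1)) (c d : Fin n) : k.succAbove c < k.succAbove d ↔ c < d :=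
  Fin.succAbove_lt_succAbove_iff

/-- The lowest dot may not be followed by an ascent inside the lowest row, so it can stand in
column `k` only if `k` is not a forced descent, and removing it leaves the columns of the lowest row
to the right of `k` decreasing. -/
theorem av123_ins {n : ℕ} {B : ℕ → ℕ} (hB : Monotone B) (hn : B 0 ≤ n + 1) (D : Set ℕ)
    (hD : ∀ x ∈ D, x + 1 < B 0) (k : Fin (n + 1)) (σ : Equiv.Perm (Fin n)) :
    (Tr B (ins k 0 σ) ∧ Av123 B (ins k 0 σ) ∧ Dec D (ins k 0 σ)) ↔
      ((k : ℕ) < B 0 ∧ (k : ℕ) ∉ D) ∧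
        (Tr (Bd B) σ ∧ Av123 (Bd B) σ ∧ Dec (Dn D (B 0) k) σ) := by
  rw [tr_ins hB]
  constructor
  · rintro ⟨⟨hk, ht⟩, ha, hd⟩
    refine ⟨⟨hk, fun hkD => ?_⟩, ht, ?_, ?_⟩
    · have h1 := hD _ hkD
      have := hd k ⟨k + 1, by omega⟩ rfl hkD
      rw [ins_self] at this
      exact absurd this (Fin.not_lt_zero _)
    · intro a b c hab hbc h1 h2 h3
      refine ha (k.succAbove a) (k.succAbove b) (k.succAbove c) ((sA_lt _ _ _).2 hab)
        ((sA_lt _ _ _).2 hbc) ((ins0_lt _ _ _ _).2 h1) ((ins0_lt _ _ _ _).2 h2) ?_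
      rw [ins0_val, shape_iff hB k hk]
      exact h3
    · intro x y hxy hx
      have hx1 := val_succAbove k x
      have hy1 := val_succAbove k y
      rcases hx with ⟨hx, hxk⟩ | ⟨hkx, hxm⟩
      · rw [if_pos (by omega)] at hx1 hy1
        exact (ins0_lt k σ y x).1 (hd _ _ (by omega) (by rwa [hx1]))
      · rw [if_neg (by omega)] at hx1 hy1
        by_contra hlt
        have hne : σ x ≠ σ y := fun e => by
          have := σ.injective e
          rw [this] at hxy; omega
        refine ha k (k.succAbove x) (k.succAbove y) (by rw [Fin.lt_def]; omega)
          (by rw [Fin.lt_def]; omega) ?_ ((ins0_lt k σ x y).2 (lt_of_le_of_ne (not_lt.1 hlt) hne))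
          ?_
        · rw [ins_self, Fin.lt_def, ins0_val]; simp
        · rw [ins_self]; simp; omega
  · rintro ⟨⟨hk, hkD⟩, ht, ha, hd⟩
    have hch := chain_rel (fun a b => σ b < σ a) (fun a b c h1 h2 => lt_trans h2 h1) k (B 0 - 1)
      (fun x y hxy hkx hy => hd x y hxy (Or.inr ⟨hkx, by omega⟩))
    refine ⟨⟨hk, ht⟩, ?_, ?_⟩
    · intro i j l hij hjl h1 h2 h3
      obtain rfl | ⟨b, rfl⟩ := Fin.eq_self_or_eq_succAbove k j
      · rw [ins_self] at h1; exact absurd h1 (Fin.not_lt_zero _)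
      obtain rfl | ⟨c, rfl⟩ := Fin.eq_self_or_eq_succAbove k l
      · rw [ins_self] at h2; exact absurd h2 (Fin.not_lt_zero _)
      rw [sA_lt] at hjl
      rw [ins0_lt] at h2
      obtain rfl | ⟨a, rfl⟩ := Fin.eq_self_or_eq_succAbove k i
      · rw [ins_self] at h3
        rw [Fin.lt_def, val_succAbove] at hij
        rw [val_succAbove] at h3
        rw [Fin.lt_def] at hjl
        split_ifs at hij h3 <;> try omega
        simp at h3
        exact absurd h2 (not_lt.2 (hch b c (by omega) hjl (by omega)).le)
      · rw [sA_lt] at hij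
        rw [ins0_lt] at h1
        rw [ins0_val, shape_iff hB k hk] at h3
        exact ha a b c hij hjl h1 h2 h3
    · intro x y hxy hx
      have hxm := hD _ hx
      obtain rfl | ⟨a, rfl⟩ := Fin.eq_self_or_eq_succAbove k x
      · exact absurd hx hkD
      obtain rfl | ⟨b, rfl⟩ := Fin.eq_self_or_eq_succAbove k y
      · rw [ins_self, Fin.lt_def, ins0_val]; simp
      rw [ins0_lt]
      rw [val_succAbove] at hx hxm
      rw [val_succAbove, val_succAbove] at hxy
      split_ifs at hxy hx hxm <;> try omega
      · exact hd a b hxy (Or.inl ⟨hx, by omega⟩)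
      · exact hd a b (by omega) (Or.inr ⟨by omega, by omega⟩)

/-- The analogue of `av123_ins`: the lowest dot may not be the end of a forced ascent, and the
columns of the lowest row to its right are increasing. -/
theorem av132_ins {n : ℕ} {B : ℕ → ℕ} (hB : Monotone B) (hn : B 0 ≤ n + 1) (D : Set ℕ)
    (hD : ∀ x ∈ D, x + 1 < B 0) (k : Fin (n + 1)) (σ : Equiv.Perm (Fin n)) :
    (Tr B (ins k 0 σ) ∧ Av132 B (ins k 0 σ) ∧ Inc D (ins k 0 σ)) ↔
      ((k : ℕ) < B 0 ∧ ((k : ℕ) = 0 ∨ (k : ℕ) - 1 ∉ D)) ∧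
        (Tr (Bd B) σ ∧ Av132 (Bd B) σ ∧ Inc (Dn D (B 0) k) σ) := by
  rw [tr_ins hB]
  constructor
  · rintro ⟨⟨hk, ht⟩, ha, hd⟩
    refine ⟨⟨hk, ?_⟩, ht, ?_, ?_⟩
    · by_contra! hc
      obtain ⟨hk0, hkD⟩ := hc
      have := hd ⟨k - 1, by omega⟩ k (by simp; omega) hkD
      rw [ins_self] at this
      exact absurd this (Fin.not_lt_zero _)
    · intro a b c hab hbc h1 h2 h3
      refine ha (k.succAbove a) (k.succAbove b) (k.succAbove c) ((sA_lt _ _ _).2 hab)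
        ((sA_lt _ _ _).2 hbc) ((ins0_lt _ _ _ _).2 h1) ((ins0_lt _ _ _ _).2 h2) ?_
      rw [ins0_val, shape_iff hB k hk]
      exact h3
    · intro x y hxy hx
      have hx1 := val_succAbove k x
      have hy1 := val_succAbove k y
      rcases hx with ⟨hx, hxk⟩ | ⟨hkx, hxm⟩
      · rw [if_pos (by omega)] at hx1 hy1
        exact (ins0_lt k σ x y).1 (hd _ _ (by omega) (by rwa [hx1]))
      · rw [if_neg (by omega)] at hx1 hy1
        by_contra hlt
        have hne : σ y ≠ σ x := fun e => by
          have := σ.injective e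
          rw [this] at hxy; omega
        refine ha k (k.succAbove x) (k.succAbove y) (by rw [Fin.lt_def]; omega)
          (by rw [Fin.lt_def]; omega) ?_ ((ins0_lt k σ y x).2 (lt_of_le_of_ne (not_lt.1 hlt) hne))
          ?_
        · rw [ins_self, Fin.lt_def, ins0_val]; simp
        · rw [ins_self]; simp; omega
  · rintro ⟨⟨hk, hkD⟩, ht, ha, hd⟩
    have hch := chain_rel (fun a b => σ a < σ b) (fun a b c h1 h2 => lt_trans h1 h2) k (B 0 - 1)
      (fun x y hxy hkx hy => hd x y hxy (Or.inr ⟨hkx, by omega⟩))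
    refine ⟨⟨hk, ht⟩, ?_, ?_⟩
    · intro i j l hij hjl h1 h2 h3
      obtain rfl | ⟨b, rfl⟩ := Fin.eq_self_or_eq_succAbove k j
      · rw [ins_self] at h2; exact absurd h2 (Fin.not_lt_zero _)
      obtain rfl | ⟨c, rfl⟩ := Fin.eq_self_or_eq_succAbove k l
      · rw [ins_self] at h1; exact absurd h1 (Fin.not_lt_zero _)
      rw [sA_lt] at hjl
      rw [ins0_lt] at h2
      obtain rfl | ⟨a, rfl⟩ := Fin.eq_self_or_eq_succAbove k i
      · rw [ins_self] at h3
        rw [Fin.lt_def, val_succAbove] at hij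
        rw [val_succAbove] at h3
        rw [Fin.lt_def] at hjl
        split_ifs at hij h3 <;> try omega
        simp at h3
        exact absurd h2 (not_lt.2 (hch b c (by omega) hjl (by omega)).le)
      · rw [sA_lt] at hij
        rw [ins0_lt] at h1
        rw [ins0_val, shape_iff hB k hk] at h3
        exact ha a b c hij hjl h1 h2 h3
    · intro x y hxy hx
      have hxm := hD _ hx
      obtain rfl | ⟨b, rfl⟩ := Fin.eq_self_or_eq_succAbove k y
      · rcases hkD with h | h
        · omega
        · rw [hxy] at h
          exact absurd hx h
      obtain rfl | ⟨a, rfl⟩ := Fin.eq_self_or_eq_succAbove k x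
      · rw [ins_self, Fin.lt_def, ins0_val]; simp
      rw [ins0_lt]
      rw [val_succAbove] at hx hxm
      rw [val_succAbove, val_succAbove] at hxy
      split_ifs at hxy hx hxm <;> try omega
      · exact hd a b hxy (Or.inl ⟨hx, by omega⟩)
      · exact hd a b (by omega) (Or.inr ⟨by omega, by omega⟩)

/-- If the lowest dot stands in column `k`, the columns to its left are increasing; this and an
increasing start of length `t` combine to a single increasing start. -/
theorem av321_ins {n : ℕ} {B : ℕ → ℕ} (hB : Monotone B) (t : ℕ) (ht1 : t ≤ n + 1)
    (k : Fin (n + 1)) (σ : Equiv.Perm (Fin n)) :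
    (Tr B (ins k 0 σ) ∧ Av321 (ins k 0 σ) ∧ IncUpTo t (ins k 0 σ)) ↔
      ((k : ℕ) < B 0 ∧ ((k : ℕ) = 0 ∨ t ≤ k)) ∧
        (Tr (Bd B) σ ∧ Av321 σ ∧ IncUpTo (if t ≤ k then (k : ℕ) else t - 1) σ) := by
  rw [tr_ins hB]
  constructor
  · rintro ⟨⟨hk, ht⟩, ha, hd⟩
    have hkt : (k : ℕ) = 0 ∨ t ≤ k := by
      by_contra! hc
      have := hd 0 k (Fin.lt_def.2 (by rw [Fin.val_zero]; omega)) hc.2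
      rw [ins_self] at this
      exact absurd this (Fin.not_lt_zero _)
    refine ⟨⟨hk, hkt⟩, ht, ?_, ?_⟩
    · intro a b c hab hbc h1 h2
      exact ha (k.succAbove a) (k.succAbove b) (k.succAbove c) ((sA_lt _ _ _).2 hab)
        ((sA_lt _ _ _).2 hbc) ((ins0_lt _ _ _ _).2 h1) ((ins0_lt _ _ _ _).2 h2)
    · intro x y hxy hy
      have hy1 := val_succAbove k y
      split_ifs at hy with htk
      · by_contra hlt
        have hne : σ y ≠ σ x := fun e => hxy.ne' (σ.injective e)
        rw [if_pos hy] at hy1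
        refine ha (k.succAbove x) (k.succAbove y) k ((sA_lt _ _ _).2 hxy)
          (by rw [Fin.lt_def]; omega) ?_ ((ins0_lt k σ y x).2 (lt_of_le_of_ne (not_lt.1 hlt) hne))
        rw [ins_self, Fin.lt_def, ins0_val]; simp
      · refine (ins0_lt k σ x y).1 (hd _ _ ((sA_lt _ _ _).2 hxy) ?_)
        split_ifs at hy1 <;> omega
  · rintro ⟨⟨hk, hkt⟩, ht, ha, hd⟩
    refine ⟨⟨hk, ht⟩, ?_, ?_⟩
    · intro i j l hij hjl h1 h2
      obtain rfl | ⟨a, rfl⟩ := Fin.eq_self_or_eq_succAbove k i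
      · rw [ins_self] at h2; exact absurd h2 (Fin.not_lt_zero _)
      obtain rfl | ⟨b, rfl⟩ := Fin.eq_self_or_eq_succAbove k j
      · rw [ins_self] at h1; exact absurd h1 (Fin.not_lt_zero _)
      rw [sA_lt] at hij
      rw [ins0_lt] at h2
      obtain rfl | ⟨c, rfl⟩ := Fin.eq_self_or_eq_succAbove k l
      · rw [Fin.lt_def, val_succAbove] at hjl
        have hbk : (b : ℕ) < l := by split_ifs at hjl <;> omega
        refine absurd h2 (not_lt.2 (hd a b hij ?_).le)
        rw [if_pos (by omega)]; exact hbk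
      · rw [sA_lt] at hjl
        rw [ins0_lt] at h1
        exact ha a b c hij hjl h1 h2
    · intro x y hxy hy
      obtain rfl | ⟨b, rfl⟩ := Fin.eq_self_or_eq_succAbove k y
      · rw [Fin.lt_def] at hxy; omega
      obtain rfl | ⟨a, rfl⟩ := Fin.eq_self_or_eq_succAbove k x
      · rw [ins_self, Fin.lt_def, ins0_val]; simp
      rw [ins0_lt]
      rw [sA_lt] at hxy
      rw [val_succAbove] at hy
      refine hd a b hxy ?_
      split_ifs at hy ⊢ <;> omega

theorem cnt_row0 {n : ℕ} (P : Equiv.Perm (Fin (n + 1)) → Prop) :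
    cnt P = ∑ k : Fin (n + 1), cnt (fun σ => P (ins k 0 σ)) := by
  rw [cnt_fiber P (fun π => π.symm 0)]
  refine Finset.sum_congr rfl fun k _ => ?_
  rw [← cnt_ins]
  refine cnt_congr fun π => ?_
  rw [Equiv.symm_apply_eq, eq_comm (a := (0 : Fin (n + 1)))]

/-- Pass from a sum over all columns to a sum over the admissible columns of the lowest row. -/
theorem sum_link {n m : ℕ} (hm : m ≤ n + 1) (c : ℕ → Prop) [DecidablePred c] (f : Fin (n + 1) → ℕ) (g : ℕ → ℕ)
    (h1 : ∀ k : Fin (n + 1), (k : ℕ) < m → c k → f k = g k)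
    (h2 : ∀ k : Fin (n + 1), ¬ ((k : ℕ) < m ∧ c k) → f k = 0) :
    ∑ k, f k = ∑ k ∈ (range m).filter c, g k := by
  have e : ∀ k : Fin (n + 1), f k = (fun k : ℕ => if k < m ∧ c k then g k else 0) k := by
    intro k
    simp only
    split_ifs with h
    · exact h1 k h.1 h.2
    · exact h2 k h
  rw [Finset.sum_congr rfl fun k _ => e k, Fin.sum_univ_eq_sum_range
    (fun k : ℕ => if k < m ∧ c k then g k else 0), ← Finset.sum_filter]
  refine Finset.sum_congr ?_ fun _ _ => rfl
  ext k
  simp only [Finset.mem_filter, Finset.mem_range]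
  constructor
  · exact fun h => h.2
  · exact fun h => ⟨by omega, h⟩

open scoped Classical in
/-- Row-by-row recursion for the number of `123`-avoiding transversals with forced descents `D`. -/
noncomputable def Hdp : ℕ → (ℕ → ℕ) → Set ℕ → ℕ
  | 0, _, _ => 1
  | n + 1, B, D => ∑ k ∈ (range (B 0)).filter (fun k => k ∉ D), Hdp n (Bd B) (Dn D (B 0) k)

open scoped Classical in
/-- Row-by-row recursion for the number of `132`-avoiding transversals with forced ascents `D`. -/
noncomputable def Gdp : ℕ → (ℕ → ℕ) → Set ℕ → ℕ
  | 0, _, _ => 1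
  | n + 1, B, D =>
    ∑ k ∈ (range (B 0)).filter (fun k => k = 0 ∨ k - 1 ∉ D), Gdp n (Bd B) (Dn D (B 0) k)

/-- Row-by-row recursion for the number of `321`-avoiding transversals whose first `t` entries
increase. -/
def Ldp : ℕ → (ℕ → ℕ) → ℕ → ℕ
  | 0, _, _ => 1
  | n + 1, B, t =>
    ∑ k ∈ (range (B 0)).filter (fun k => k = 0 ∨ t ≤ k), Ldp n (Bd B) (if t ≤ k then k else t - 1)

theorem Dn_lt {B : ℕ → ℕ} (hB : Monotone B) {D : Set ℕ} {k : ℕ} (hk : k < B 0) :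
    ∀ x ∈ Dn D (B 0) k, x + 1 < Bd B 0 := by
  have := hB (Nat.zero_le 1)
  rintro x (⟨_, hx⟩ | ⟨_, hx⟩) <;> simp only [Bd] <;> simp <;> omega

theorem cnt_zero {P : Equiv.Perm (Fin 0) → Prop} (h : ∀ π, P π) : cnt P = 1 := by
  classical
  unfold cnt
  rw [Finset.filter_true_of_mem (fun π _ => h π)]
  simp

theorem cnt_const_and {n : ℕ} (c : Prop) (P : Equiv.Perm (Fin n) → Prop) (hc : c) :
    cnt (fun π => c ∧ P π) = cnt P := cnt_congr fun _ => by simp [hc]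

theorem Hdp_eq (n : ℕ) : ∀ (B : ℕ → ℕ), Monotone B → (∀ i, B i ≤ n) → ∀ D : Set ℕ,
    (∀ x ∈ D, x + 1 < B 0) →
    cnt (fun π : Equiv.Perm (Fin n) => Tr B π ∧ Av123 B π ∧ Dec D π) = Hdp n B D := by
  induction n with
  | zero =>
    intro B _ _ D _
    exact cnt_zero fun π => ⟨fun i => i.elim0, fun i => i.elim0, fun i => i.elim0⟩
  | succ n ih =>
    intro B hB hn D hD
    classical
    rw [cnt_row0, Hdp]
    refine sum_link (hn 0) _ _ _ (fun k hk hc => ?_) (fun k hk => ?_)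
    · rw [cnt_congr fun σ => av123_ins hB (hn 0) D hD k σ, cnt_const_and _ _ ⟨hk, hc⟩]
      refine ih _ (Bd_mono hB) (fun i => ?_) _ (Dn_lt hB hk)
      have := hn (i + 1)
      simp only [Bd]; omega
    · refine cnt_false fun σ h => hk ((av123_ins hB (hn 0) D hD k σ).1 h).1

theorem Gdp_eq (n : ℕ) : ∀ (B : ℕ → ℕ), Monotone B → (∀ i, B i ≤ n) → ∀ D : Set ℕ,
    (∀ x ∈ D, x + 1 < B 0) →
    cnt (fun π : Equiv.Perm (Fin n) => Tr B π ∧ Av132 B π ∧ Inc D π) = Gdp n B D := by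
  induction n with
  | zero =>
    intro B _ _ D _
    exact cnt_zero fun π => ⟨fun i => i.elim0, fun i => i.elim0, fun i => i.elim0⟩
  | succ n ih =>
    intro B hB hn D hD
    classical
    rw [cnt_row0, Gdp]
    refine sum_link (hn 0) _ _ _ (fun k hk hc => ?_) (fun k hk => ?_)
    · rw [cnt_congr fun σ => av132_ins hB (hn 0) D hD k σ, cnt_const_and _ _ ⟨hk, hc⟩]
      refine ih _ (Bd_mono hB) (fun i => ?_) _ (Dn_lt hB hk)
      have := hn (i + 1)
      simp only [Bd]; omega
    · refine cnt_false fun σ h => hk ((av132_ins hB (hn 0) D hD k σ).1 h).1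

theorem Ldp_eq (n : ℕ) : ∀ (B : ℕ → ℕ), Monotone B → (∀ i, B i ≤ n) → ∀ t : ℕ, t ≤ n →
    cnt (fun π : Equiv.Perm (Fin n) => Tr B π ∧ Av321 π ∧ IncUpTo t π) = Ldp n B t := by
  induction n with
  | zero =>
    intro B _ _ D _
    exact cnt_zero fun π => ⟨fun i => i.elim0, fun i => i.elim0, fun i => i.elim0⟩
  | succ n ih =>
    intro B hB hn t htn
    rw [cnt_row0, Ldp]
    refine sum_link (hn 0) _ _ _ (fun k hk hc => ?_) (fun k hk => ?_)
    · rw [cnt_congr fun σ => av321_ins hB t htn k σ, cnt_const_and _ _ ⟨hk, hc⟩]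
      refine ih _ (Bd_mono hB) (fun i => ?_) _ (by split_ifs <;> omega)
      have := hn (i + 1)
      simp only [Bd]; omega
    · refine cnt_false fun σ h => hk ((av321_ins hB t htn k σ).1 h).1

/-! ### Comparison of 132 and 123 -/

/-- The diagram of size `n` with row lengths `B` is proper: it contains the staircase. -/
def Proper (n : ℕ) (B : ℕ → ℕ) : Prop := ∀ i < n, i + 1 ≤ B i

/-- The diagram of size `n` with row lengths `B` has an `i`-critical point with `i + 1 ≥ s`
(the row `j` has height `j + 1`, so the index of its critical point is `B j - (j + 1)`). -/
def Crit (s n : ℕ) (B : ℕ → ℕ) : Prop := ∃ j, j + 1 < n ∧ B j < B (j + 1) ∧ j + s ≤ B j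

theorem Proper.bd {n : ℕ} {B : ℕ → ℕ} (h : Proper (n + 1) B) : Proper n (Bd B) := by
  intro i hi
  have := h (i + 1) (by omega)
  simp only [Bd]; omega

theorem Bd_le {n : ℕ} {B : ℕ → ℕ} (h : ∀ i, B i ≤ n + 1) (i : ℕ) : Bd B i ≤ n := by
  have := h (i + 1)
  simp only [Bd]; omega

theorem Crit.of_bd {s n : ℕ} (hs : 1 ≤ s) {B : ℕ → ℕ} (h : Crit s n (Bd B)) : Crit s (n + 1) B := by
  obtain ⟨j, h1, h2, h3⟩ := h
  simp only [Bd] at h2 h3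
  exact ⟨j + 1, by omega, by omega, by omega⟩

theorem Dn_mono {D E : Set ℕ} (h : D ⊆ E) (m k : ℕ) : Dn D m k ⊆ Dn E m k := by
  rintro x (⟨h1, h2⟩ | h1)
  · exact Or.inl ⟨h h1, h2⟩
  · exact Or.inr h1

/-- Forcing fewer descents leaves at least as many transversals. -/
theorem Hdp_anti (n : ℕ) : ∀ (B : ℕ → ℕ) {D E : Set ℕ}, D ⊆ E → Hdp n B E ≤ Hdp n B D := by
  classical
  induction n with
  | zero => intros; simp [Hdp]
  | succ n ih =>
    intro B D E h
    rw [Hdp, Hdp]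
    refine (Finset.sum_le_sum fun k _ => ih _ (Dn_mono h _ k)).trans
      (Finset.sum_le_sum_of_subset ?_)
    intro k
    simp only [Finset.mem_filter]
    exact fun hk => ⟨hk.1, fun hD => hk.2 (h hD)⟩

theorem Hdp_pos (n : ℕ) : ∀ (B : ℕ → ℕ), Monotone B → Proper n B → ∀ D : Set ℕ,
    (∀ x ∈ D, x + 1 < B 0) → 0 < Hdp n B D := by
  classical
  induction n with
  | zero => intros; simp [Hdp]
  | succ n ih =>
    intro B hB hp D hD
    have h0 := hp 0 (by omega)
    rw [Hdp]
    refine Finset.sum_pos' (fun _ _ => Nat.zero_le _) ⟨B 0 - 1, ?_, ?_⟩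
    · rw [Finset.mem_filter, Finset.mem_range]
      exact ⟨by omega, fun h => by have := hD _ h; omega⟩
    · exact ih _ (Bd_mono hB) hp.bd _ (Dn_lt hB (by omega))

theorem Hdp_strict {n : ℕ} {B : ℕ → ℕ} (hB : Monotone B) (hp : Proper (n + 1) B) {D E : Set ℕ}
    (h : D ⊆ E) (hE : ∀ x ∈ E, x + 1 < B 0) {x : ℕ} (hx : x ∈ E) (hx' : x ∉ D) :
    Hdp (n + 1) B E < Hdp (n + 1) B D := by
  classical
  rw [Hdp, Hdp]
  refine (Finset.sum_le_sum fun k _ => Hdp_anti n _ (Dn_mono h _ k)).trans_lt ?_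
  have hxm := hE x hx
  refine Finset.sum_lt_sum_of_subset (i := x) ?_ ?_ ?_ ?_ (fun _ _ _ => Nat.zero_le _)
  · intro k
    simp only [Finset.mem_filter]
    exact fun hk => ⟨hk.1, fun hD => hk.2 (h hD)⟩
  · simp only [Finset.mem_filter, Finset.mem_range]
    exact ⟨by omega, hx'⟩
  · simp only [Finset.mem_filter]
    exact fun hh => hh.2 hx
  · exact Hdp_pos n _ (Bd_mono hB) hp.bd _ (Dn_lt hB (by omega))

/-- Each maximal run of forced adjacencies has one admissible column for `132` (its start) and one
for `123` (its end); moving the choice from the start to the end only weakens the next state. -/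
theorem GH_step {n : ℕ} {B : ℕ → ℕ} {D : Set ℕ} (hD : ∀ x ∈ D, x + 1 < B 0)
    (ih : ∀ k < B 0, Gdp n (Bd B) (Dn D (B 0) k) ≤ Hdp n (Bd B) (Dn D (B 0) k)) :
    Gdp (n + 1) B D ≤ Hdp (n + 1) B D ∧
    ∀ k q, (k = 0 ∨ k - 1 ∉ D) → k ≤ q → q < B 0 → q ∉ D → (∀ x, k ≤ x → x < q → x ∈ D) →
      Gdp n (Bd B) (Dn D (B 0) k) < Hdp n (Bd B) (Dn D (B 0) q) →
      Gdp (n + 1) B D < Hdp (n + 1) B D := by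
  classical
  have hex : ∀ k, k < B 0 → ∃ q, k ≤ q ∧ q < B 0 ∧ q ∉ D ∧ ∀ x, k ≤ x → x < q → x ∈ D := by
    intro k hk
    have h0 : ∃ q, k ≤ q ∧ q ∉ D := ⟨B 0 - 1, by omega, fun h => by have := hD _ h; omega⟩
    refine ⟨Nat.find h0, (Nat.find_spec h0).1, ?_, (Nat.find_spec h0).2, ?_⟩
    · have : Nat.find h0 ≤ B 0 - 1 :=
        Nat.find_min' h0 ⟨by omega, fun h => by have := hD _ h; omega⟩
      omega
    · intro x hx hxq
      by_contra hc
      exact Nat.find_min h0 hxq ⟨hx, hc⟩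
  choose! e he1 he2 he3 he4 using hex
  set S := (range (B 0)).filter (fun k => k = 0 ∨ k - 1 ∉ D) with hS
  set T := (range (B 0)).filter (fun k => k ∉ D) with hT
  have hmem : ∀ k, k ∈ S ↔ k < B 0 ∧ (k = 0 ∨ k - 1 ∉ D) := by simp [hS]
  have hinj : Set.InjOn e S := by
    have key : ∀ k k', k ∈ S → k' ∈ S → k < k' → e k ≠ e k' := by
      intro k k' hk hk' hlt heq
      rw [hmem] at hk hk'
      rcases hk'.2 with h | h
      · omega
      · exact h (he4 k hk.1 (k' - 1) (by omega) (by have := he1 k' hk'.1; omega))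
    intro k hk k' hk' heq
    rcases lt_trichotomy k k' with h | h | h
    · exact absurd heq (key _ _ hk hk' h)
    · exact h
    · exact absurd heq.symm (key _ _ hk' hk h)
  have hsub : ∀ k ∈ S, Dn D (B 0) (e k) ⊆ Dn D (B 0) k := by
    intro k hk x hx
    rw [hmem] at hk
    have h1 := he1 k hk.1
    have h2 := he2 k hk.1
    rcases hx with ⟨hx, hxq⟩ | ⟨hx, hxq⟩
    · by_cases hxk : x + 1 < k
      · exact Or.inl ⟨hx, hxk⟩
      · refine Or.inr ⟨?_, by omega⟩
        by_contra hlt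
        rcases hk.2 with h | h
        · omega
        · rw [show k - 1 = x by omega] at h
          exact h hx
    · exact Or.inr ⟨by omega, hxq⟩
  have hterm : ∀ k ∈ S, Gdp n (Bd B) (Dn D (B 0) k) ≤ Hdp n (Bd B) (Dn D (B 0) (e k)) :=
    fun k hk => (ih k ((hmem k).1 hk).1).trans (Hdp_anti n _ (hsub k hk))
  have hlast : ∑ k ∈ S, Hdp n (Bd B) (Dn D (B 0) (e k)) ≤ Hdp (n + 1) B D := by
    rw [Hdp, ← Finset.sum_image (g := e) (f := fun q => Hdp n (Bd B) (Dn D (B 0) q)) hinj]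
    refine Finset.sum_le_sum_of_subset ?_
    intro q hq
    obtain ⟨k, hk, rfl⟩ := Finset.mem_image.1 hq
    rw [hmem] at hk
    rw [Finset.mem_filter, Finset.mem_range]
    exact ⟨he2 k hk.1, he3 k hk.1⟩
  refine ⟨?_, ?_⟩
  · rw [Gdp]
    exact (Finset.sum_le_sum hterm).trans hlast
  · intro k q hk hkq hq hqD hrun hlt
    have hkS : k ∈ S := (hmem k).2 ⟨by omega, hk⟩
    have heq : e k = q := by
      rcases lt_trichotomy (e k) q with h | h | h
      · exact absurd (hrun _ (he1 k (by omega)) h) (he3 k (by omega))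
      · exact h
      · exact absurd (he4 k (by omega) q hkq h) hqD
    rw [Gdp]
    refine (Finset.sum_lt_sum hterm ⟨k, hkS, ?_⟩).trans_le hlast
    rw [heq]; exact hlt

theorem Gdp_le (n : ℕ) : ∀ (B : ℕ → ℕ), Monotone B → ∀ D : Set ℕ,
    (∀ x ∈ D, x + 1 < B 0) → Gdp n B D ≤ Hdp n B D := by
  induction n with
  | zero => intros; simp [Gdp, Hdp]
  | succ n ih =>
    intro B hB D hD
    exact (GH_step hD fun k hk => ih _ (Bd_mono hB) _ (Dn_lt hB hk)).1

/-- A critical point of index `≥ 2` yields strict inequality: at a critical point of the lowest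
row, two rows suffice to reach different states, and a higher critical point is moved down by placing
the lowest dot at the end of its row. -/
theorem Gdp_lt (n : ℕ) : ∀ (B : ℕ → ℕ), Monotone B → (∀ i, B i ≤ n) → Proper n B →
    Crit 3 n B → Gdp n B ∅ < Hdp n B ∅ := by
  induction n with
  | zero =>
    rintro B _ _ _ ⟨j, hj, _⟩
    omega
  | succ n ih =>
    rintro B hB hn hp ⟨j, hj, hlt, hj3⟩
    have h0 := hp 0 (by omega)
    have hstep := (GH_step (n := n) (B := B) (D := ∅) (by simp)
      fun k hk => Gdp_le n _ (Bd_mono hB) _ (Dn_lt hB hk)).2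
    rcases Nat.eq_zero_or_pos j with rfl | hj0
    · refine hstep 0 0 (Or.inl rfl) le_rfl (by omega) (by simp) (by omega) ?_
      have hn1 := hn 1
      simp only [zero_add] at hlt hj3
      obtain ⟨n, rfl⟩ : ∃ n', n = n' + 2 := ⟨n - 2, by omega⟩
      set m := B 0 with hm
      have hB1 : Bd B 0 = B 1 - 1 := rfl
      have hD1 := Dn_lt (D := ∅) hB (k := 0) (by omega)
      refine (GH_step (n := n + 1) (B := Bd B) hD1 fun k hk => Gdp_le _ _ (Bd_mono (Bd_mono hB)) _
        (Dn_lt (Bd_mono hB) hk)).2 0 (m - 2) (Or.inl rfl) (by omega) (by omega) ?_ ?_ ?_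
      · rintro (⟨h, _⟩ | ⟨_, h⟩)
        · exact h
        · omega
      · intro x _ hx
        exact Or.inr ⟨by omega, by omega⟩
      · refine (Gdp_le _ _ (Bd_mono (Bd_mono hB)) _ (Dn_lt (Bd_mono hB) (by omega))).trans_lt ?_
        refine Hdp_strict (Bd_mono (Bd_mono hB)) hp.bd.bd (x := m - 3) ?_
          (Dn_lt (Bd_mono hB) (by omega)) ?_ ?_
        · rintro x (⟨_, h⟩ | ⟨_, h⟩)
          · exact Or.inr ⟨by omega, by omega⟩
          · exact Or.inr ⟨by omega, by omega⟩
        · exact Or.inr ⟨by omega, by omega⟩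
        · rintro (⟨_, h⟩ | ⟨h, _⟩) <;> omega
    · refine hstep (B 0 - 1) (B 0 - 1) (Or.inr (by simp)) le_rfl (by omega) (by simp)
        (by omega) ?_
      have hD : Dn ∅ (B 0) (B 0 - 1) = ∅ := by
        ext x
        simp only [Dn, Set.mem_union, Set.mem_setOf_eq, Set.mem_empty_iff_false, false_and, false_or,
          iff_false]
        omega
      rw [hD]
      obtain ⟨i, rfl⟩ : ∃ i, j = i + 1 := ⟨j - 1, by omega⟩
      refine ih _ (Bd_mono hB) (Bd_le hn) hp.bd ⟨i, by omega, ?_, ?_⟩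
      · simp only [Bd]; omega
      · simp only [Bd]; omega

/-- The forced adjacencies among the columns `≥ a` of a row of length `m`. -/
def Da (a m : ℕ) : Set ℕ := {x | a ≤ x ∧ x + 1 < m}

theorem Dn_Da {a m k : ℕ} (h : k ≤ a) : Dn (Da a m) m k = Da k (m - 1) := by
  ext x
  simp only [Dn, Da, Set.mem_union, Set.mem_setOf_eq]
  omega

theorem Dn_Da' {a m : ℕ} (h : a < m) : Dn (Da a m) m (m - 1) = Da a (m - 1) := by
  ext x
  simp only [Dn, Da, Set.mem_union, Set.mem_setOf_eq]
  omega

/-- Without critical points of index `≥ 2` the forced adjacencies always form a single run that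
reaches the end of the row, and on such states both recursions coincide. -/
theorem GH_eq (n : ℕ) : ∀ (B : ℕ → ℕ), Monotone B → ¬ Crit 3 n B → ∀ a,
    Gdp n B (Da a (B 0)) = Hdp n B (Da a (B 0)) := by
  classical
  induction n with
  | zero => intros; simp [Gdp, Hdp]
  | succ n ih =>
    intro B hB hc a
    have hnext : ∀ k, Gdp n (Bd B) (Da k (B 0 - 1)) = Hdp n (Bd B) (Da k (B 0 - 1)) := by
      intro k
      rcases n with _ | n
      · simp [Gdp, Hdp]
      have h01 : B 0 ≤ B 1 := hB (Nat.zero_le 1)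
      have hc' : ¬ Crit 3 (n + 1) (Bd B) := fun h => hc (h.of_bd (by norm_num))
      rcases h01.eq_or_lt with h | h
      · have := ih (Bd B) (Bd_mono hB) hc' k
        rwa [show Bd B 0 = B 0 - 1 by simp [Bd, h]] at this
      · have hle : B 0 ≤ 2 := by
          by_contra hgt
          exact hc ⟨0, by omega, h, by omega⟩
        have h1 : Da k (B 0 - 1) = Da (Bd B 0) (Bd B 0) := by
          ext x; simp only [Da, Set.mem_setOf_eq]; omega
        rw [h1]
        exact ih (Bd B) (Bd_mono hB) hc' _
    rw [Gdp, Hdp]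
    rcases Nat.lt_or_ge a (B 0) with ham | ham
    · have e1 : (range (B 0)).filter (fun k => k = 0 ∨ k - 1 ∉ Da a (B 0)) = range (a + 1) := by
        ext k
        simp only [Da, Finset.mem_filter, Finset.mem_range, Set.mem_setOf_eq]
        omega
      have e2 : (range (B 0)).filter (fun k => k ∉ Da a (B 0)) =
          insert (B 0 - 1) (range a) := by
        ext k
        simp only [Da, Finset.mem_filter, Finset.mem_range, Set.mem_setOf_eq, Finset.mem_insert]
        omega
      rw [e1, e2, Finset.sum_insert (by simp; omega), Finset.sum_range_succ, add_comm,
        Dn_Da le_rfl, Dn_Da' ham, hnext]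
      congr 1
      refine Finset.sum_congr rfl fun k hk => ?_
      rw [Finset.mem_range] at hk
      rw [Dn_Da hk.le, hnext]
    · have e1 : (range (B 0)).filter (fun k => k = 0 ∨ k - 1 ∉ Da a (B 0)) = range (B 0) := by
        ext k
        simp only [Da, Finset.mem_filter, Finset.mem_range, Set.mem_setOf_eq]
        omega
      have e2 : (range (B 0)).filter (fun k => k ∉ Da a (B 0)) = range (B 0) := by
        ext k
        simp only [Da, Finset.mem_filter, Finset.mem_range, Set.mem_setOf_eq]
        omega
      rw [e1, e2]
      refine Finset.sum_congr rfl fun k hk => ?_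
      rw [Finset.mem_range] at hk
      rw [Dn_Da (by omega), hnext]

theorem Gdp_lt_iff {n : ℕ} {B : ℕ → ℕ} (hB : Monotone B) (hn : ∀ i, B i ≤ n) (hp : Proper n B) :
    Gdp n B ∅ < Hdp n B ∅ ↔ Crit 3 n B := by
  refine ⟨fun h => ?_, Gdp_lt n B hB hn hp⟩
  by_contra hc
  have := GH_eq n B hB hc (B 0)
  rw [show Da (B 0) (B 0) = ∅ by ext x; simp [Da]; omega] at this
  omega

/-! ### Equality of the 123 and 321 counts -/

open scoped Classical in
/-- The continuant of a path on `m` vertices whose `x`-th edge is present iff `x ∈ D`. -/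
noncomputable def ps (D : Set ℕ) : ℕ → Polynomial ℤ
  | 0 => 1
  | 1 => Polynomial.X
  | m + 2 => Polynomial.X * ps D (m + 1) - if m ∈ D then ps D m else 0

/-- The continuant of the full path on `m` vertices, a (rescaled) Chebyshev polynomial. -/
noncomputable def ch (m : ℕ) : Polynomial ℤ := ps Set.univ m

theorem ch_zero : ch 0 = 1 := rfl
theorem ch_one : ch 1 = Polynomial.X := rfl
theorem ch_step (m : ℕ) : ch (m + 2) = Polynomial.X * ch (m + 1) - ch m := by
  simp [ch, ps]

theorem ps_step_not {D : Set ℕ} {m : ℕ} (h : ∀ x, x + 1 = m → x ∉ D) :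
    ps D (m + 1) = Polynomial.X * ps D m := by
  rcases m with _ | m
  · simp [ps]
  · rw [ps, if_neg (h m rfl), sub_zero]

/-- The continuant on `m` vertices is monic of degree `m`. -/
theorem ps_coeff (D : Set ℕ) (m : ℕ) :
    ((ps D m).coeff m = 1 ∧ ∀ i, m < i → (ps D m).coeff i = 0) ∧
    ((ps D (m + 1)).coeff (m + 1) = 1 ∧ ∀ i, m + 1 < i → (ps D (m + 1)).coeff i = 0) := by
  induction m with
  | zero =>
    refine ⟨⟨by simp [ps], fun i hi => ?_⟩, by simp [ps], fun i hi => ?_⟩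
    · rw [ps, Polynomial.coeff_one, if_neg (by omega)]
    · rw [ps, Polynomial.coeff_X, if_neg (by omega)]
  | succ m ih =>
    refine ⟨ih.2, ?_, fun i hi => ?_⟩
    · rw [ps, Polynomial.coeff_sub, Polynomial.coeff_X_mul, ih.2.1]
      split_ifs
      · rw [ih.1.2 _ (by omega)]; simp
      · simp
    · obtain ⟨i, rfl⟩ : ∃ i', i = i' + 1 := ⟨i - 1, by omega⟩
      rw [ps, Polynomial.coeff_sub, Polynomial.coeff_X_mul, ih.2.2 i (by omega)]
      split_ifs
      · rw [ih.1.2 _ (by omega)]; simp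
      · simp

open scoped Classical in
/-- Compare the path with edges `D` to the full path by expanding at the missing edges. -/
theorem ps_expand (D : Set ℕ) (m : ℕ) :
    (ps D (m + 1) = ch (m + 1) + ∑ k ∈ range m, if k ∉ D then ps D k * ch (m - 1 - k) else 0) ∧
    (ps D (m + 2) = ch (m + 2) + ∑ k ∈ range (m + 1), if k ∉ D then ps D k * ch (m - k) else 0) := by
  induction m with
  | zero =>
    refine ⟨by simp [ps, ch], ?_⟩
    rw [ch_step]
    by_cases h : 0 ∈ D <;> simp [ps, ch, h]
  | succ m ih =>
    refine ⟨by simpa using ih.2, ?_⟩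
    obtain ⟨ih1, ih2⟩ := ih
    have hcut : ∀ k ∈ range m, (if k ∉ D then ps D k * ch (m + 1 - k) else 0) =
        Polynomial.X * (if k ∉ D then ps D k * ch (m - k) else 0) -
          (if k ∉ D then ps D k * ch (m - 1 - k) else 0) := by
      intro k hk
      rw [Finset.mem_range] at hk
      obtain ⟨d, rfl⟩ : ∃ d, m = k + d + 1 := ⟨m - k - 1, by omega⟩
      rw [show k + d + 1 + 1 - k = d + 2 by omega, show k + d + 1 - k = d + 1 by omega,
        show k + d + 1 - 1 - k = d by omega, ch_step]
      split_ifs <;> ring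
    rw [Finset.sum_range_succ, Finset.sum_range_succ, Finset.sum_congr rfl hcut,
      Finset.sum_sub_distrib, ← Finset.mul_sum, ch_step]
    rw [Finset.sum_range_succ] at ih2
    rw [ps, show m + 1 + 1 = m + 2 by rfl, ih2]
    rw [Nat.sub_self, Nat.sub_self, show m + 1 - m = 1 by omega, ch_zero, ch_one]
    have e : (if m + 1 ∈ D then ps D (m + 1) else 0) =
        ps D (m + 1) - if m + 1 ∉ D then ps D (m + 1) * 1 else 0 := by
      by_cases h : m + 1 ∈ D <;> simp [h]
    rw [e]
    have e2 : (if m ∉ D then ps D m * Polynomial.X else 0) =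
      Polynomial.X * (if m ∉ D then ps D m * 1 else 0) := by
      split_ifs <;> ring
    rw [e2, show ps D (m + 1) - (if m + 1 ∉ D then ps D (m + 1) * 1 else 0) = ch (m + 1) +
      (∑ k ∈ range m, if k ∉ D then ps D k * ch (m - 1 - k) else 0) -
        (if m + 1 ∉ D then ps D (m + 1) * 1 else 0) by rw [← ih1]]
    ring

theorem ps_congr {D E : Set ℕ} (k : ℕ) (h : ∀ x, x + 1 < k → (x ∈ D ↔ x ∈ E)) :
    ∀ i, i ≤ k → ps D i = ps E i := by
  intro i
  induction i using Nat.strong_induction_on with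
  | _ i ih =>
    intro hi
    match i, ih, hi with
    | 0, _, _ => rfl
    | 1, _, _ => rfl
    | i + 2, ih, hi =>
      rw [ps, ps, ih (i + 1) (by omega) (by omega), ih i (by omega) (by omega)]
      have hi' := h i (by omega)
      by_cases hD : i ∈ D
      · rw [if_pos hD, if_pos (hi'.1 hD)]
      · rw [if_neg hD, if_neg fun hE => hD (hi'.2 hE)]

/-- Removing the lowest dot from column `k` cuts the path before the vertex `k`: the part left of
`k` keeps its edges, and the rest becomes a full path. -/
theorem ps_Dn {D : Set ℕ} {m k : ℕ} (hk : k < m) :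
    ps (Dn D m k) (m - 1) = ps D k * ch (m - 1 - k) := by
  have hc : ps (Dn D m k) k = ps D k := by
    refine ps_congr k (fun x hx => ?_) k le_rfl
    simp only [Dn, Set.mem_union, Set.mem_setOf_eq]
    constructor
    · rintro (h | h)
      · exact h.1
      · omega
    · exact fun h => Or.inl ⟨h, hx⟩
  have key : ∀ j, (k + j ≤ m - 1 → ps (Dn D m k) (k + j) = ps D k * ch j) ∧
      (k + j + 1 ≤ m - 1 → ps (Dn D m k) (k + j + 1) = ps D k * ch (j + 1)) := by
    intro j
    induction j with
    | zero =>
      refine ⟨fun _ => by rw [add_zero, ch_zero, mul_one, hc], fun _ => ?_⟩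
      rw [add_zero, ps_step_not, hc, ch_one, mul_comm]
      rintro x rfl
      rintro (h | h)
      · have := h.2; omega
      · have := h.1; omega
    | succ j ih =>
      refine ⟨ih.2, fun h => ?_⟩
      have hmem : k + j ∈ Dn D m k := Or.inr ⟨by omega, by omega⟩
      rw [show k + (j + 1) + 1 = (k + j) + 2 by ring, ps, if_pos hmem,
        ih.1 (by omega), ih.2 (by omega), ch_step]
      ring
  have := (key (m - 1 - k)).1 (by omega)
  rwa [show k + (m - 1 - k) = m - 1 by omega] at this

/-- Isolated vertices contribute factors `X`. -/
theorem ps_tail {D : Set ℕ} {M : ℕ} (hD : ∀ x ∈ D, x + 1 < M) (j : ℕ) :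
    ps D (M + j) = Polynomial.X ^ j * ps D M := by
  induction j with
  | zero => simp
  | succ j ih =>
    rw [show M + (j + 1) = M + j + 1 by ring, ps_step_not, ih]
    · ring
    · intro x hx hxD
      have := hD x hxD
      omega

/-- The linear functional that evaluates both row-by-row recursions. Deleting the lowest row, of
length `m`, replaces `p` (of degree at most `m`) by `X p` minus the multiple of `ch (m + 1)` that
cancels the term of degree `m + 1`, and then multiplies by a power of `X` for the columns by which
the next row is longer. -/
noncomputable def Lam : ℕ → (ℕ → ℕ) → Polynomial ℤ → ℤ
  | 0, _, p => p.coeff 0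
  | n + 1, B, p => Lam n (Bd B) (Polynomial.X ^ (Bd B 0 - (B 0 - 1)) *
      (Polynomial.X * p - Polynomial.C (p.coeff (B 0)) * ch (B 0 + 1)))

theorem Lam_add (n : ℕ) : ∀ (B : ℕ → ℕ) (p q : Polynomial ℤ),
    Lam n B (p + q) = Lam n B p + Lam n B q := by
  induction n with
  | zero => intro B p q; simp [Lam]
  | succ n ih =>
    intro B p q
    rw [Lam, Lam, Lam, ← ih]
    congr 1
    simp only [Polynomial.coeff_add, map_add]
    ring

theorem Lam_sum (n : ℕ) (B : ℕ → ℕ) (s : Finset ℕ) (f : ℕ → Polynomial ℤ) :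
    Lam n B (∑ k ∈ s, f k) = ∑ k ∈ s, Lam n B (f k) :=
  map_sum (AddMonoidHom.mk' (Lam n B) (Lam_add n B)) f s

/-- The recursion `Hdp` depends on the forced descents only through the continuant: `ps_expand`
and `ps_Dn` identify the sum over the position of the lowest dot with the step of `Lam`. -/
theorem Hdp_Lam (n : ℕ) : ∀ (B : ℕ → ℕ), Monotone B → (∀ i, B i ≤ n) → ∀ D : Set ℕ,
    (∀ x ∈ D, x + 1 < B 0) → (Hdp n B D : ℤ) = Lam n B (ps D (B 0)) := by
  classical
  induction n with
  | zero =>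
    intro B _ hn D _
    have := hn 0
    rw [show B 0 = 0 by omega]
    simp [Hdp, Lam, ps]
  | succ n ih =>
    intro B hB hn D hD
    rw [Hdp, Lam, (ps_coeff D (B 0)).1.1, Polynomial.C_1, one_mul, ← ps_step_not,
      (ps_expand D (B 0)).1, add_sub_cancel_left, ← Finset.sum_filter, Finset.mul_sum, Lam_sum]
    · push_cast
      refine Finset.sum_congr rfl fun k hk => ?_
      rw [Finset.mem_filter, Finset.mem_range] at hk
      rw [ih _ (Bd_mono hB) (Bd_le hn) _ (Dn_lt hB hk.1), ← ps_Dn hk.1, ← ps_tail]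
      · congr 2
        have : B 0 ≤ B 1 := hB (Nat.zero_le 1)
        simp only [Bd, zero_add]; omega
      · rintro x (⟨_, h⟩ | ⟨_, h⟩) <;> omega
    · intro x hx hxD
      have := hD x hxD
      omega

theorem ch_identity (t d : ℕ) :
    Polynomial.X ^ (d + 1) * ch t - ch (t + d + 1) =
      (if t = 0 then 0 else Polynomial.X ^ d * ch (t - 1)) +
        ∑ j ∈ range d, Polynomial.X ^ (d - 1 - j) * ch (t + j) := by
  induction d with
  | zero =>
    rcases t with _ | t
    · simp [ch_zero, ch_one]
    · simp [ch_step]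
  | succ d ih =>
    have e : ∀ j ∈ range d, Polynomial.X ^ (d + 1 - 1 - j) * ch (t + j) =
        Polynomial.X * (Polynomial.X ^ (d - 1 - j) * ch (t + j)) := by
      intro j hj
      rw [Finset.mem_range] at hj
      rw [show d + 1 - 1 - j = (d - 1 - j) + 1 by omega]
      ring
    rw [Finset.sum_range_succ, Finset.sum_congr rfl e, ← Finset.mul_sum,
      show t + (d + 1) + 1 = (t + d) + 2 by ring, ch_step]
    have e2 : (if t = 0 then 0 else Polynomial.X ^ (d + 1) * ch (t - 1)) =
        Polynomial.X * (if t = 0 then 0 else Polynomial.X ^ d * ch (t - 1)) := by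
      split_ifs <;> ring
    rw [e2, show d + 1 - 1 - d = 0 by omega]
    linear_combination Polynomial.X * ih

/-- The recursion `Ldp` with an increasing start of length `t` is evaluated by `Lam` at the
continuant of a full path on `t` vertices and `B 0 - t` isolated ones. -/
theorem Ldp_Lam (n : ℕ) : ∀ (B : ℕ → ℕ), Monotone B → (∀ i, B i ≤ n) → ∀ t, t ≤ B 0 →
    (Ldp n B t : ℤ) = Lam n B (Polynomial.X ^ (B 0 - t) * ch t) := by
  induction n with
  | zero =>
    intro B _ hn t ht
    have := hn 0
    rw [show B 0 = 0 by omega, show t = 0 by omega]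
    simp [Ldp, Lam, ch_zero]
  | succ n ih =>
    intro B hB hn t ht
    obtain ⟨d, hd⟩ : ∃ d, B 0 = t + d := ⟨B 0 - t, by omega⟩
    have hcoef : (Polynomial.X ^ (B 0 - t) * ch t).coeff (B 0) = 1 := by
      rw [Polynomial.coeff_X_pow_mul', if_pos (by omega), show B 0 - (B 0 - t) = t by omega]
      exact (ps_coeff Set.univ t).1.1
    have hsum : Polynomial.X * (Polynomial.X ^ (B 0 - t) * ch t) - ch (B 0 + 1) =
        ∑ k ∈ (range (B 0)).filter (fun k => k = 0 ∨ t ≤ k),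
          Polynomial.X ^ (B 0 - 1 - (if t ≤ k then k else t - 1)) *
            ch (if t ≤ k then k else t - 1) := by
      have h1 := ch_identity t d
      rw [show B 0 - t = d by omega, hd, ← mul_assoc, ← pow_succ', h1]
      have h2 : ∑ j ∈ range d, Polynomial.X ^ (d - 1 - j) * ch (t + j) =
          ∑ k ∈ Finset.Ico t (t + d), Polynomial.X ^ (t + d - 1 - (if t ≤ k then k else t - 1)) *
            ch (if t ≤ k then k else t - 1) := by
        rw [Finset.sum_Ico_eq_sum_range, Nat.add_sub_cancel_left]
        refine Finset.sum_congr rfl fun j _ => ?_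
        rw [if_pos (by omega), show t + d - 1 - (t + j) = d - 1 - j by omega]
      rw [h2]
      by_cases ht0 : t = 0
      · rw [if_pos ht0, zero_add]
        refine Finset.sum_congr ?_ fun _ _ => rfl
        ext k
        simp only [Finset.mem_Ico, Finset.mem_filter, Finset.mem_range]
        omega
      · rw [if_neg ht0]
        have h3 : (range (t + d)).filter (fun k => k = 0 ∨ t ≤ k) =
            insert 0 (Finset.Ico t (t + d)) := by
          ext k
          simp only [Finset.mem_Ico, Finset.mem_filter, Finset.mem_range, Finset.mem_insert]
          omega
        rw [h3, Finset.sum_insert (by simp; omega), if_neg (by omega),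
          show t + d - 1 - (t - 1) = d by omega]
    rw [Ldp, Lam, hcoef, Polynomial.C_1, one_mul, hsum, Finset.mul_sum, Lam_sum]
    push_cast
    refine Finset.sum_congr rfl fun k hk => ?_
    rw [Finset.mem_filter, Finset.mem_range] at hk
    have h01 : B 0 ≤ B 1 := hB (Nat.zero_le 1)
    have hb : Bd B 0 = B 1 - 1 := rfl
    have ht' : (if t ≤ k then k else t - 1) ≤ B 0 - 1 := by split_ifs <;> omega
    rw [ih _ (Bd_mono hB) (Bd_le hn) _ (by omega), ← mul_assoc, ← pow_add]
    congr 3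
    omega

theorem Hdp_eq_Ldp {n : ℕ} {B : ℕ → ℕ} (hB : Monotone B) (hn : ∀ i, B i ≤ n) :
    Hdp n B ∅ = Ldp n B 0 := by
  have h1 := Hdp_Lam n B hB hn ∅ (by simp)
  have h2 := Ldp_Lam n B hB hn 0 (Nat.zero_le _)
  have h3 := ps_tail (D := ∅) (M := 0) (by simp) (B 0)
  rw [zero_add] at h3
  rw [h3] at h1
  rw [ch_zero, Nat.sub_zero] at h2
  have h4 : ps ∅ 0 = 1 := by simp [ps]
  rw [h4] at h1
  exact_mod_cast h1.trans h2.symm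

/-! ### Column-by-column recursions for 312 and 321 -/

/-- Avoidance of `312` inside the diagram `B`. -/
def Av312 {n : ℕ} (B : ℕ → ℕ) (π : Equiv.Perm (Fin n)) : Prop :=
  ∀ i j k, i < j → j < k → π j < π k → π k < π i → ¬ (k : ℕ) < B (π j)

/-- The diagram left after deleting the leftmost column and the row `y`. -/
def Del (y : ℕ) (B : ℕ → ℕ) : ℕ → ℕ := fun i => B (if i < y then i else i + 1) - 1

theorem Del_mono {B : ℕ → ℕ} (hB : Monotone B) (y : ℕ) : Monotone (Del y B) := by
  intro i j h
  refine Nat.sub_le_sub_right (hB ?_) 1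
  split_ifs <;> omega

theorem Del_zero (B : ℕ → ℕ) : Del 0 B = Bd B := by
  funext i
  simp [Del, Bd]

/-- The number of `312`-avoiding transversals of size `n + 1` with first entry at least `y`. -/
noncomputable def KK (n : ℕ) (B : ℕ → ℕ) (y : ℕ) : ℕ :=
  cnt (fun π : Equiv.Perm (Fin (n + 1)) => (Tr B π ∧ Av312 B π) ∧ y ≤ π 0)

/-- The number of `321`-avoiding transversals of size `n + 1` with first entry at least `y`. -/
noncomputable def LL (n : ℕ) (B : ℕ → ℕ) (y : ℕ) : ℕ :=
  cnt (fun π : Equiv.Perm (Fin (n + 1)) => (Tr B π ∧ Av321 π) ∧ y ≤ π 0)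

theorem insy_val {n : ℕ} (y : Fin (n + 1)) (σ : Equiv.Perm (Fin n)) (c : Fin n) :
    ((ins 0 y σ c.succ : Fin (n + 1)) : ℕ) = if (σ c : ℕ) < y then (σ c : ℕ) else σ c + 1 := by
  rw [← Fin.succAbove_zero_apply, ins_succAbove, val_succAbove]

theorem insy_lt {n : ℕ} (y : Fin (n + 1)) (σ : Equiv.Perm (Fin n)) (c d : Fin n) :
    ins 0 y σ c.succ < ins 0 y σ d.succ ↔ σ c < σ d := by
  rw [← Fin.succAbove_zero_apply, ← Fin.succAbove_zero_apply, ins_succAbove, ins_succAbove, sA_lt]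

theorem insy_shape {n : ℕ} (B : ℕ → ℕ) (y : Fin (n + 1)) (σ : Equiv.Perm (Fin n)) (c d : Fin n) :
    ((c.succ : Fin (n + 1)) : ℕ) < B (ins 0 y σ d.succ) ↔ (c : ℕ) < Del y B (σ d) := by
  rw [insy_val, Del, Fin.val_succ]
  omega

theorem tr_insy {n : ℕ} {B : ℕ → ℕ} (y : Fin (n + 1)) (hy : 0 < B y) (σ : Equiv.Perm (Fin n)) :
    Tr B (ins 0 y σ) ↔ Tr (Del y B) σ := by
  unfold Tr
  rw [Fin.forall_fin_succ]
  simp only [insy_shape, ins_self, Fin.val_zero, hy, true_and]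

theorem insy_asc {n : ℕ} (y : Fin (n + 2)) (σ : Equiv.Perm (Fin (n + 1))) :
    ins 0 y σ 0 < ins 0 y σ 1 ↔ (y : ℕ) ≤ σ 0 := by
  rw [ins_self, ← Fin.succ_zero_eq_one, Fin.lt_def, insy_val]
  split_ifs <;> omega

theorem av312_insy {n : ℕ} {B : ℕ → ℕ} (y : Fin (n + 2)) (σ : Equiv.Perm (Fin (n + 1)))
    (h : (y : ℕ) ≤ σ 0) : Av312 B (ins 0 y σ) ↔ Av312 (Del y B) σ := by
  constructor
  · intro ha a b c hab hbc h1 h2 h3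
    exact ha a.succ b.succ c.succ (Fin.succ_lt_succ_iff.2 hab) (Fin.succ_lt_succ_iff.2 hbc)
      ((insy_lt _ _ _ _).2 h1) ((insy_lt _ _ _ _).2 h2) ((insy_shape _ _ _ _ _).2 h3)
  · intro ha i j k hij hjk h1 h2 h3
    obtain ⟨b, rfl⟩ := Fin.exists_succ_eq.2 (Fin.pos_iff_ne_zero.1 (lt_of_le_of_lt (Fin.zero_le i) hij))
    obtain ⟨c, rfl⟩ := Fin.exists_succ_eq.2 (Fin.pos_iff_ne_zero.1 (lt_of_le_of_lt (Fin.zero_le _) hjk))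
    rw [Fin.succ_lt_succ_iff] at hjk
    rw [insy_lt] at h1
    rw [insy_shape] at h3
    obtain rfl | ⟨a, rfl⟩ := Fin.eq_zero_or_eq_succ i
    · rw [ins_self, Fin.lt_def, insy_val] at h2
      have hc : (σ c : ℕ) < y := by split_ifs at h2 <;> omega
      refine ha 0 b c (Fin.pos_iff_ne_zero.2 ?_) hjk h1 (Fin.lt_def.2 (by omega)) h3
      rintro rfl
      rw [Fin.lt_def] at h1
      omega
    · rw [insy_lt] at h2
      exact ha a b c (Fin.succ_lt_succ_iff.1 hij) hjk h1 h2 h3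

theorem av321_insy {n : ℕ} (y : Fin (n + 2)) (σ : Equiv.Perm (Fin (n + 1)))
    (h : (y : ℕ) ≤ σ 0) : Av321 (ins 0 y σ) ↔ Av321 σ := by
  constructor
  · intro ha a b c hab hbc h1 h2
    exact ha a.succ b.succ c.succ (Fin.succ_lt_succ_iff.2 hab) (Fin.succ_lt_succ_iff.2 hbc)
      ((insy_lt _ _ _ _).2 h1) ((insy_lt _ _ _ _).2 h2)
  · intro ha i j k hij hjk h1 h2
    obtain ⟨b, rfl⟩ := Fin.exists_succ_eq.2 (Fin.pos_iff_ne_zero.1 (lt_of_le_of_lt (Fin.zero_le i) hij))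
    obtain ⟨c, rfl⟩ := Fin.exists_succ_eq.2 (Fin.pos_iff_ne_zero.1 (lt_of_le_of_lt (Fin.zero_le _) hjk))
    rw [Fin.succ_lt_succ_iff] at hjk
    rw [insy_lt] at h1
    obtain rfl | ⟨a, rfl⟩ := Fin.eq_zero_or_eq_succ i
    · rw [ins_self, Fin.lt_def, insy_val] at h2
      have hc : (σ b : ℕ) < y := by split_ifs at h2 <;> omega
      refine ha 0 b c (Fin.pos_iff_ne_zero.2 ?_) hjk h1 (Fin.lt_def.2 (by omega))
      rintro rfl
      omega
    · rw [insy_lt] at h2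
      exact ha a b c (Fin.succ_lt_succ_iff.1 hij) hjk h1 h2

/-- Transversals that start with an ascent, sorted by their first entry, which is then deleted. -/
theorem cnt_asc {n : ℕ} (A : Equiv.Perm (Fin (n + 2)) → Prop)
    (A' : ℕ → Equiv.Perm (Fin (n + 1)) → Prop)
    (h : ∀ (y : Fin (n + 2)) (σ : Equiv.Perm (Fin (n + 1))), (y : ℕ) ≤ σ 0 →
      (A (ins 0 y σ) ↔ A' y σ)) (y : ℕ) :
    cnt (fun π => (A π ∧ y ≤ π 0) ∧ π 0 < π 1) =
      ∑ z : Fin (n + 2), if y ≤ z then cnt (fun σ => A' z σ ∧ (z : ℕ) ≤ σ 0) else 0 := by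
  rw [cnt_fiber _ (fun π => π 0)]
  refine Finset.sum_congr rfl fun z _ => ?_
  rw [cnt_ins 0 z (fun π => (A π ∧ y ≤ π 0) ∧ π 0 < π 1)]
  split_ifs with hz
  · refine cnt_congr fun σ => ?_
    rw [insy_asc, ins_self]
    constructor
    · rintro ⟨⟨h1, _⟩, h2⟩
      exact ⟨(h z σ h2).1 h1, h2⟩
    · rintro ⟨h1, h2⟩
      exact ⟨⟨(h z σ h2).2 h1, hz⟩, h2⟩
  · refine cnt_false fun σ h => hz ?_
    have := h.1.2
    rwa [ins_self] at this

theorem KK_asc {n : ℕ} {B : ℕ → ℕ} (hB : Monotone B) (h0 : 0 < B 0) (y : ℕ) :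
    cnt (fun π : Equiv.Perm (Fin (n + 2)) => ((Tr B π ∧ Av312 B π) ∧ y ≤ π 0) ∧ π 0 < π 1) =
      ∑ z : Fin (n + 2), if y ≤ z then KK n (Del z B) z else 0 := by
  refine cnt_asc _ (fun z σ => Tr (Del z B) σ ∧ Av312 (Del z B) σ) (fun z σ hz => ?_) y
  rw [tr_insy z (lt_of_lt_of_le h0 (hB (Nat.zero_le _))), av312_insy z σ hz]

theorem LL_asc {n : ℕ} {B : ℕ → ℕ} (hB : Monotone B) (h0 : 0 < B 0) (y : ℕ) :
    cnt (fun π : Equiv.Perm (Fin (n + 2)) => ((Tr B π ∧ Av321 π) ∧ y ≤ π 0) ∧ π 0 < π 1) =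
      ∑ z : Fin (n + 2), if y ≤ z then LL n (Del z B) z else 0 := by
  refine cnt_asc _ (fun z σ => Tr (Del z B) σ ∧ Av321 σ) (fun z σ hz => ?_) y
  rw [tr_insy z (lt_of_lt_of_le h0 (hB (Nat.zero_le _))), av321_insy z σ hz]

theorem one_succAbove_zero' {n : ℕ} : (1 : Fin (n + 2)).succAbove 0 = 0 := by
  apply Fin.ext
  rw [val_succAbove]
  simp

theorem ins1_zero {n : ℕ} (σ : Equiv.Perm (Fin (n + 1))) :
    ((ins (1 : Fin (n + 2)) 0 σ 0 : Fin (n + 2)) : ℕ) = σ 0 + 1 := by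
  have := ins0_val (1 : Fin (n + 2)) σ 0
  rwa [one_succAbove_zero'] at this

/-- The dot of the lowest row lies in the first column if that row has length at most `1`. -/
theorem desc_false {n : ℕ} {B : ℕ → ℕ} (h : B 0 < 2) (π : Equiv.Perm (Fin (n + 2)))
    (ht : Tr B π) : π 0 < π 1 := by
  have h1 := ht (π.symm 0)
  rw [Equiv.apply_symm_apply, Fin.val_zero] at h1
  have h2 : π.symm 0 = 0 := Fin.ext (by rw [Fin.val_zero]; omega)
  rw [Equiv.symm_apply_eq] at h2
  rw [← h2, Fin.pos_iff_ne_zero]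
  intro h3
  have := π.injective (h3.trans h2)
  simp at this

/-- A `321`-avoiding permutation that starts with a descent has its lowest dot in column `1`;
delete it. -/
theorem LL_desc {n : ℕ} {B : ℕ → ℕ} (hB : Monotone B) (h0 : 2 ≤ B 0) (y : ℕ) :
    cnt (fun π : Equiv.Perm (Fin (n + 2)) => ((Tr B π ∧ Av321 π) ∧ y ≤ π 0) ∧ ¬ π 0 < π 1) =
      LL n (Bd B) (y - 1) := by
  have e : ∀ π : Equiv.Perm (Fin (n + 2)), (((Tr B π ∧ Av321 π) ∧ y ≤ π 0) ∧ ¬ π 0 < π 1) ↔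
      (((Tr B π ∧ Av321 π) ∧ y ≤ π 0) ∧ π 1 = 0) := by
    intro π
    refine and_congr_right fun h => ⟨fun hd => ?_, fun hd => by rw [hd]; exact Fin.not_lt_zero _⟩
    have hlt : π 1 < π 0 := lt_of_le_of_ne (not_lt.1 hd) (fun e => by simpa using π.injective e)
    by_contra hne
    set c := π.symm 0 with hc
    have hπc : π c = 0 := by simp [hc]
    have hc0 : c ≠ 0 := by
      intro h'
      rw [h'] at hπc
      rw [hπc] at hlt
      exact Fin.not_lt_zero _ hlt
    have hc1 : c ≠ 1 := by
      intro h'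
      rw [h'] at hπc
      exact hne hπc
    refine h.1.2 0 1 c (by simp [Fin.lt_def]) ?_ ?_ hlt
    · rw [Fin.lt_def]
      have : (c : ℕ) ≠ 0 := fun h' => hc0 (Fin.ext h')
      have : (c : ℕ) ≠ 1 := fun h' => hc1 (Fin.ext h')
      rw [Fin.val_one]
      omega
    · rw [hπc]; exact Fin.pos_iff_ne_zero.2 hne
  rw [cnt_congr e, cnt_ins 1 0 (fun π => (Tr B π ∧ Av321 π) ∧ y ≤ π 0), LL]
  refine cnt_congr fun σ => ?_
  rw [tr_ins hB, ins1_zero, Fin.val_one]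
  have : Av321 (ins 1 0 σ) ↔ Av321 σ := by
    constructor
    · intro ha a b c hab hbc h1 h2
      exact ha _ _ _ ((sA_lt 1 _ _).2 hab) ((sA_lt 1 _ _).2 hbc) ((ins0_lt 1 _ _ _).2 h1)
        ((ins0_lt 1 _ _ _).2 h2)
    · intro ha i j k hij hjk h1 h2
      have hi : i ≠ 1 := by rintro rfl; rw [ins_self] at h2; exact Fin.not_lt_zero _ h2
      have hj : j ≠ 1 := by rintro rfl; rw [ins_self] at h1; exact Fin.not_lt_zero _ h1
      have hk : k ≠ 1 := by rintro rfl; rw [Fin.lt_def] at hij hjk; rw [Fin.val_one] at hjk; omega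
      obtain ⟨a, rfl⟩ := ne_cases _ _ hi
      obtain ⟨b, rfl⟩ := ne_cases _ _ hj
      obtain ⟨c, rfl⟩ := ne_cases _ _ hk
      rw [sA_lt] at hij hjk
      rw [ins0_lt] at h1 h2
      exact ha a b c hij hjk h1 h2
  rw [this]
  have h1 : 1 < B 0 := h0
  simp only [h1, true_and]
  refine and_congr_right fun _ => ?_
  omega

/-! ### Cyclic shift of the low values -/

/-- `C` is the cyclic shift of `T`: it fixes everything outside `T`, sends the least element of `T`
to the greatest, and every other element to its predecessor in `T`. -/
structure IsShift {N : ℕ} (T : Finset (Fin N)) (C : Equiv.Perm (Fin N)) : Prop where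
  fix : ∀ t, t ∉ T → C t = t
  mem : ∀ t, t ∈ T → C t ∈ T
  top : ∀ a ∈ T, (∀ t ∈ T, a ≤ t) → ∀ t ∈ T, t ≤ C a
  pred : ∀ s ∈ T, ∀ t ∈ T, s < t → s ≤ C t ∧ C t < t

theorem exists_shift {N : ℕ} (T : Finset (Fin N)) : ∃ C, IsShift T C := by
  induction T using Finset.induction_on_max with
  | empty => exact ⟨1, by simp, by simp, by simp, by simp⟩
  | insert a T ha ih =>
    obtain ⟨C, hC⟩ := ih
    have haT : a ∉ T := fun h => lt_irrefl _ (ha a h)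
    rcases T.eq_empty_or_nonempty with rfl | hne
    · exact ⟨1, by simp, by simp, by simp, by simp⟩
    set M := T.max' hne with hM
    have hMT : M ∈ T := T.max'_mem hne
    have hle : ∀ t ∈ T, t ≤ M := fun t ht => T.le_max' t ht
    have haM : M < a := ha M hMT
    have hCa : C a = a := hC.fix a haT
    have hmin : ∀ t ∈ T, (∀ s ∈ T, t ≤ s) → C t = M := fun t ht h =>
      le_antisymm (hle _ (hC.mem t ht)) (hC.top t ht h M hMT)
    have hA : (Equiv.swap a M * C) a = M := by simp [hCa]
    have hmn : ∀ t ∈ T, (∀ s ∈ T, t ≤ s) → (Equiv.swap a M * C) t = a := by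
      intro t ht h
      simp [hmin t ht h]
    have hoth : ∀ s ∈ T, ∀ t ∈ T, s < t → (Equiv.swap a M * C) t = C t := by
      intro s hs t ht hst
      have h1 := (hC.pred s hs t ht hst).2
      rw [Equiv.Perm.mul_apply, Equiv.swap_apply_of_ne_of_ne]
      · exact fun h => haT (h ▸ hC.mem t ht)
      · exact fun h => absurd (h ▸ h1) (not_lt.2 (hle t ht))
    have hcase : ∀ t ∈ T, (∀ s ∈ T, t ≤ s) ∨ ∃ s ∈ T, s < t := by
      intro t _
      by_contra! hc
      obtain ⟨⟨s, hs, hst⟩, h2⟩ := hc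
      exact absurd hst (not_lt.2 (h2 s hs))
    refine ⟨Equiv.swap a M * C, ?_, ?_, ?_, ?_⟩
    · intro t ht
      rw [Finset.mem_insert, not_or] at ht
      rw [Equiv.Perm.mul_apply, hC.fix t ht.2, Equiv.swap_apply_of_ne_of_ne ht.1]
      exact fun h => ht.2 (h ▸ hMT)
    · intro t ht
      rw [Finset.mem_insert] at ht ⊢
      rcases ht with rfl | ht
      · rw [hA]; exact Or.inr hMT
      · rcases hcase t ht with h | ⟨s, hs, hst⟩
        · exact Or.inl (hmn t ht h)
        · rw [hoth s hs t ht hst]; exact Or.inr (hC.mem t ht)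
    · intro t ht hmin' s hs
      rw [Finset.mem_insert] at ht
      rcases ht with rfl | ht
      · exact absurd (hmin' M (Finset.mem_insert_of_mem hMT)) (not_le.2 haM)
      · rw [hmn t ht fun u hu => hmin' u (Finset.mem_insert_of_mem hu)]
        rcases Finset.mem_insert.1 hs with rfl | hs
        · exact le_rfl
        · exact (ha s hs).le
    · intro s hs t ht hst
      rcases Finset.mem_insert.1 ht with rfl | ht'
      · rw [hA]
        rcases Finset.mem_insert.1 hs with rfl | hs'
        · exact absurd hst (lt_irrefl _)
        · exact ⟨hle s hs', haM⟩
      · rcases Finset.mem_insert.1 hs with rfl | hs'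
        · exact absurd (hst.trans (ha t ht')) (lt_irrefl _)
        · rw [hoth s hs' t ht' hst]
          exact hC.pred s hs' t ht' hst

/-- The cyclic shift of `T`. -/
noncomputable def shift {N : ℕ} (T : Finset (Fin N)) : Equiv.Perm (Fin N) :=
  (exists_shift T).choose

theorem shift_spec {N : ℕ} (T : Finset (Fin N)) : IsShift T (shift T) :=
  (exists_shift T).choose_spec

theorem shift_mem_iff {N : ℕ} (T : Finset (Fin N)) (t : Fin N) : shift T t ∈ T ↔ t ∈ T := by
  refine ⟨fun h => ?_, (shift_spec T).mem t⟩
  by_contra hc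
  rw [(shift_spec T).fix t hc] at h
  exact hc h

/-- The values below the first entry of `π` that occur in the first `m` columns. -/
def lowset {n : ℕ} (m : ℕ) (π : Equiv.Perm (Fin (n + 1))) : Finset (Fin (n + 1)) :=
  Finset.univ.filter (fun t => t < π 0 ∧ (π.symm t : ℕ) < m)

theorem mem_lowset {n : ℕ} {m : ℕ} {π : Equiv.Perm (Fin (n + 1))} {t : Fin (n + 1)} :
    t ∈ lowset m π ↔ t < π 0 ∧ (π.symm t : ℕ) < m := by simp [lowset]

theorem mem_lowset' {n : ℕ} {m : ℕ} {π : Equiv.Perm (Fin (n + 1))} {c : Fin (n + 1)} :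
    π c ∈ lowset m π ↔ π c < π 0 ∧ (c : ℕ) < m := by simp [lowset]

theorem zero_not_mem_lowset {n : ℕ} {m : ℕ} {π : Equiv.Perm (Fin (n + 1))} :
    π 0 ∉ lowset m π := by simp [lowset]

/-- Composing with a permutation of the low values changes neither the first entry nor the set of
low values. -/
theorem lowset_mul {n : ℕ} {m : ℕ} {π C : Equiv.Perm (Fin (n + 1))}
    (h1 : ∀ t, t ∉ lowset m π → C t = t) (h2 : ∀ t, C t ∈ lowset m π ↔ t ∈ lowset m π) :
    (C * π) 0 = π 0 ∧ lowset m (C * π) = lowset m π := by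
  have h0 : (C * π) 0 = π 0 := h1 _ zero_not_mem_lowset
  refine ⟨h0, ?_⟩
  ext t
  rw [mem_lowset, h0]
  have e : (C * π).symm t = π.symm (C.symm t) := rfl
  rw [e]
  by_cases ht : t ∈ lowset m π
  · have h3 : C.symm t ∈ lowset m π := by rw [← h2]; simpa using ht
    simp only [ht, iff_true]
    exact ⟨(mem_lowset.1 ht).1, (mem_lowset.1 h3).2⟩
  · have h3 : C.symm t = t := by rw [Equiv.symm_apply_eq]; exact (h1 t ht).symm
    rw [h3]
    exact mem_lowset.symm

theorem lowset_shift {n : ℕ} (m : ℕ) (π : Equiv.Perm (Fin (n + 1))) :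
    (shift (lowset m π) * π) 0 = π 0 ∧ lowset m (shift (lowset m π) * π) = lowset m π :=
  lowset_mul (shift_spec _).fix (shift_mem_iff _)

theorem lowset_shift_inv {n : ℕ} (m : ℕ) (π : Equiv.Perm (Fin (n + 1))) :
    ((shift (lowset m π))⁻¹ * π) 0 = π 0 ∧
      lowset m ((shift (lowset m π))⁻¹ * π) = lowset m π := by
  refine lowset_mul (fun t ht => ?_) (fun t => ?_)
  · rw [Equiv.Perm.inv_eq_iff_eq]; exact ((shift_spec _).fix t ht).symm
  · rw [← shift_mem_iff]; simp

/-- The bijection of permutations that cyclically shifts the low values. -/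
noncomputable def Phi (n m : ℕ) : Equiv.Perm (Fin (n + 1)) ≃ Equiv.Perm (Fin (n + 1)) where
  toFun π := shift (lowset m π) * π
  invFun π := (shift (lowset m π))⁻¹ * π
  left_inv π := by simp [(lowset_shift m π).2]
  right_inv π := by simp [(lowset_shift_inv m π).2]

theorem Phi_apply {n m : ℕ} (τ : Equiv.Perm (Fin (n + 1))) (c : Fin (n + 1)) :
    Phi n m τ c = shift (lowset m τ) (τ c) := rfl

theorem Phi_zero {n m : ℕ} (τ : Equiv.Perm (Fin (n + 1))) : Phi n m τ 0 = τ 0 :=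
  (lowset_shift m τ).1

theorem lowset_Phi {n m : ℕ} (τ : Equiv.Perm (Fin (n + 1))) :
    lowset m (Phi n m τ) = lowset m τ := (lowset_shift m τ).2

/-- Avoidance of `312` by the dots outside column `1`. -/
def Av312off {n : ℕ} (B : ℕ → ℕ) (π : Equiv.Perm (Fin (n + 2))) : Prop :=
  ∀ i j k, i ≠ 1 → j ≠ 1 → k ≠ 1 → i < j → j < k → π j < π k → π k < π i → ¬ (k : ℕ) < B (π j)

/-- Shifting the low values turns a transversal with lowest dot in column `1` and no `312` outside
that column into a `312`-avoiding transversal that starts with a descent. -/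
theorem phi_forward {n : ℕ} {B : ℕ → ℕ} (hB : Monotone B) (h2 : 2 ≤ B 0)
    {τ : Equiv.Perm (Fin (n + 2))} (ht : Tr B τ) (ha : Av312off B τ) (h1 : τ 1 = 0) :
    (Tr B (Phi (n + 1) (B 0) τ) ∧ Av312 B (Phi (n + 1) (B 0) τ)) ∧
      Phi (n + 1) (B 0) τ 1 < Phi (n + 1) (B 0) τ 0 := by
  have hB0 : ∀ i, B 0 ≤ B i := fun i => hB (Nat.zero_le i)
  set T := lowset (B 0) τ with hT
  set C := shift T with hC
  set π := Phi (n + 1) (B 0) τ with hπ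
  have hS : IsShift T C := shift_spec T
  have hπτ : ∀ c, π c = C (τ c) := fun c => rfl
  have hπ0 : π 0 = τ 0 := Phi_zero τ
  have hmemτ : ∀ c, τ c ∈ T ↔ τ c < τ 0 ∧ (c : ℕ) < B 0 := fun c => mem_lowset'
  have hmemπ : ∀ c, π c ∈ T ↔ τ c ∈ T := fun c => shift_mem_iff T (τ c)
  have hτ0 : τ 0 ∉ T := zero_not_mem_lowset
  have hpos : (0 : Fin (n + 2)) < τ 0 := by
    rw [Fin.pos_iff_ne_zero]
    intro e
    have := τ.injective (e.trans h1.symm)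
    simp at this
  have h0T : (0 : Fin (n + 2)) ∈ T := by
    have := (hmemτ 1).2 ⟨by rw [h1]; exact hpos, by rw [Fin.val_one]; omega⟩
    rwa [h1] at this
  have hTlt : ∀ t ∈ T, t < τ 0 := fun t ht => (mem_lowset.1 ht).1
  have hnot : ∀ c, τ c ∉ T → π c = τ c := fun c hc => hS.fix _ hc
  have htop : ∀ t ∈ T, t ≤ π 1 := by
    intro t ht
    rw [hπτ, h1]
    exact hS.top 0 h0T (fun s _ => Fin.zero_le s) t ht
  have hτpos : ∀ c, c ≠ 1 → 0 < τ c := by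
    intro c hc
    rw [Fin.pos_iff_ne_zero, ← h1]
    exact fun e => hc (τ.injective e)
  have hdown : ∀ c, c ≠ 1 → τ c ∈ T → π c < τ c := fun c hc hcT =>
    (hS.pred 0 h0T _ hcT (hτpos c hc)).2
  have hπ1 : π 1 ∈ T := by rw [hmemπ, h1]; exact h0T
  have hF1 : ∀ j k, j ≠ 0 → j ≠ 1 → k ≠ 1 → j < k → τ j < τ k → τ k < τ 0 → (k : ℕ) < B (τ j) →
      False := fun j k hj0 hj hk hjk h3 h4 h5 =>
    ha 0 j k (by simp) hj hk (Fin.pos_iff_ne_zero.2 hj0) hjk h3 h4 h5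
  have hnT : ∀ c, c ≠ 0 → τ c ∉ T → τ c < τ 0 → B 0 ≤ c := by
    intro c _ hc hlt
    by_contra hh
    exact hc ((hmemτ c).2 ⟨hlt, by omega⟩)
  refine ⟨⟨?_, ?_⟩, ?_⟩
  · intro c
    by_cases hc : τ c ∈ T
    · exact lt_of_lt_of_le ((hmemτ c).1 hc).2 (hB0 _)
    · rw [hnot c hc]; exact ht c
  · intro i j k hij hjk h3 h4 h5
    have hj0 : j ≠ 0 := Fin.pos_iff_ne_zero.1 (lt_of_le_of_lt (Fin.zero_le i) hij)
    have hk0 : k ≠ 0 := Fin.pos_iff_ne_zero.1 (lt_of_le_of_lt (Fin.zero_le j) hjk)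
    have hk1 : k ≠ 1 := by
      rintro rfl
      rw [Fin.lt_def, Fin.val_one] at hjk
      rw [Fin.lt_def] at hij
      omega
    have hpj0 : π j < τ 0 ∨ τ 0 < π j := by
      rw [← hπ0]; exact lt_or_gt_of_ne fun e => hj0 (π.injective e)
    have hpk0 : π k < τ 0 ∨ τ 0 < π k := by
      rw [← hπ0]; exact lt_or_gt_of_ne fun e => hk0 (π.injective e)
    rcases hpk0 with hk | hk
    · have hjlt : π j < τ 0 := h3.trans hk
      by_cases hkT : τ k ∈ T
      · have hkm := ((hmemτ k).1 hkT).2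
        have hjT : τ j ∈ T := by
          by_contra hjT
          have := hnT j hj0 hjT (by rw [← hnot j hjT]; exact hjlt)
          rw [Fin.lt_def] at hjk
          omega
        by_cases hj1 : j = 1
        · rw [hj1] at h3
          exact absurd h3 (not_lt.2 (htop _ ((hmemπ k).2 hkT)))
        · have hlt : τ j < τ k := by
            by_contra hge
            have hlt' : τ k < τ j := lt_of_le_of_ne (not_lt.1 hge)
              (fun e => hjk.ne' (τ.injective e))
            have h6 := (hS.pred _ hkT _ hjT hlt').1
            have h7 := hdown k hk1 hkT
            exact absurd (h7.trans_le h6) (not_lt.2 h3.le)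
          exact hF1 j k hj0 hj1 hk1 hjk hlt ((hmemτ k).1 hkT).1 (lt_of_lt_of_le hkm (hB0 _))
      · have hπk := hnot k hkT
        have hkm := hnT k hk0 hkT (by rw [← hπk]; exact hk)
        by_cases hjT : τ j ∈ T
        · -- the value `π j` sits in an early column `c` of `τ`
          have hjT' : π j ∈ T := (hmemπ j).2 hjT
          obtain ⟨c, hc⟩ : ∃ c, τ c = π j := ⟨τ.symm (π j), by simp⟩
          rw [← hc] at hjT' h3 h5
          have hcm := (hmemτ c).1 hjT'
          rw [hπk] at h3 hk
          by_cases hc1 : c = 1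
          · rw [hc1, h1, Fin.val_zero] at h5
            omega
          · have hc0 : c ≠ 0 := by
              rintro rfl
              exact hτ0 hjT'
            exact hF1 c k hc0 hc1 hk1 (by rw [Fin.lt_def]; omega) h3 hk h5
        · have hπj := hnot j hjT
          rw [hπk] at h3 hk
          rw [hπj] at h3 h5
          refine hF1 j k hj0 ?_ hk1 hjk h3 hk h5
          rintro rfl
          rw [h1] at hjT
          exact hjT h0T
    · have hbig : ∀ c, τ 0 < π c → π c = τ c := by
        intro c hc
        refine hnot c fun hcT => ?_
        exact absurd (hTlt _ ((hmemπ c).2 hcT)) (not_lt.2 hc.le)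
      have hi1 : i ≠ 1 := by
        rintro rfl
        exact absurd (hTlt _ hπ1) (not_lt.2 (hk.trans h4).le)
      have hπk := hbig k hk
      have hπi := hbig i (hk.trans h4)
      rw [hπk] at h3 h4 hk
      rw [hπi] at h4
      have hj1 : j ≠ 1 := by
        rintro rfl
        have : i = 0 := Fin.ext (by rw [Fin.lt_def, Fin.val_one] at hij; rw [Fin.val_zero]; omega)
        rw [this] at h4
        exact absurd h4 (not_lt.2 hk.le)
      by_cases hjT : τ j ∈ T
      · have hle := hdown j hj1 hjT
        refine ha i j k hi1 hj1 hk1 hij hjk ((hTlt _ hjT).trans hk) h4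
          (lt_of_lt_of_le h5 (hB ?_))
        exact_mod_cast hle.le
      · rw [hnot j hjT] at h3 h5
        exact ha i j k hi1 hj1 hk1 hij hjk h3 h4 h5
  · rw [hπ0]; exact hTlt _ hπ1

/-! ### The descending case for 312 -/

/-- If the shifted permutation is a `312`-avoiding transversal starting with a descent, the
unshifted one has its lowest dot in column `1`; the entry `π 1` of the shifted one is the greatest
low value. -/
theorem phi_backward {n : ℕ} {B : ℕ → ℕ} (hB : Monotone B) (h2 : 2 ≤ B 0)
    {τ : Equiv.Perm (Fin (n + 2))} (ht : Tr B (Phi (n + 1) (B 0) τ))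
    (ha : Av312 B (Phi (n + 1) (B 0) τ))
    (hd : Phi (n + 1) (B 0) τ 1 < Phi (n + 1) (B 0) τ 0) :
    (Tr B τ ∧ τ 1 = 0) ∧ 0 ∈ lowset (B 0) τ ∧
      (∀ t ∈ lowset (B 0) τ, t ≤ Phi (n + 1) (B 0) τ 1) := by
  have hB0 : ∀ i, B 0 ≤ B i := fun i => hB (Nat.zero_le i)
  have hTT := lowset_Phi (m := B 0) τ
  set π := Phi (n + 1) (B 0) τ with hπ
  have hmemπ : ∀ c, π c ∈ lowset (B 0) π ↔ π c < π 0 ∧ (c : ℕ) < B 0 := fun c => mem_lowset'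
  rw [hTT] at hmemπ
  have hmemτ : ∀ c, τ c ∈ lowset (B 0) τ ↔ τ c < τ 0 ∧ (c : ℕ) < B 0 := fun c => mem_lowset'
  set T := lowset (B 0) τ with hT
  have hS : IsShift T (shift T) := shift_spec T
  have hπτ : ∀ c, π c = shift T (τ c) := fun c => rfl
  have h0T : (0 : Fin (n + 2)) ∈ T := by
    have h := ht (π.symm 0)
    have h' := (hmemπ (π.symm 0)).2
    rw [Equiv.apply_symm_apply] at h h'
    exact h' ⟨lt_of_le_of_lt (Fin.zero_le _) hd, h⟩
  have h1T : π 1 ∈ T := (hmemπ 1).2 ⟨hd, by rw [Fin.val_one]; omega⟩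
  have htop : ∀ t ∈ T, t ≤ π 1 := by
    intro t htT
    by_contra hlt
    rw [not_le] at hlt
    obtain ⟨c, rfl⟩ := π.surjective t
    have hc := (hmemπ c).1 htT
    have hc0 : c ≠ 0 := by rintro rfl; exact lt_irrefl _ hc.1
    have hc1 : c ≠ 1 := by rintro rfl; exact lt_irrefl _ hlt
    refine ha 0 1 c (by simp [Fin.lt_def]) ?_ hlt hc.1 (lt_of_lt_of_le hc.2 (hB0 _))
    rw [Fin.lt_def, Fin.val_one]
    have : (c : ℕ) ≠ 0 := fun h' => hc0 (Fin.ext h')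
    have : (c : ℕ) ≠ 1 := fun h' => hc1 (Fin.ext h')
    omega
  refine ⟨⟨?_, ?_⟩, h0T, htop⟩
  · intro c
    by_cases hc : τ c ∈ T
    · exact lt_of_lt_of_le ((hmemτ c).1 hc).2 (hB0 _)
    · have := ht c
      rwa [hπτ, hS.fix _ hc] at this
  · have h3 : shift T 0 = π 1 := le_antisymm (htop _ (hS.mem 0 h0T))
      (hS.top 0 h0T (fun s _ => Fin.zero_le s) _ h1T)
    rw [hπτ] at h3
    exact ((shift T).injective h3).symm

/-- Between a row of length at most `k` and a longer one, some row `r` passes the column `k`. -/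
theorem exists_jump {B : ℕ → ℕ} {k a : ℕ} (ha : B a ≤ k) : ∀ b, a ≤ b → k < B b →
    ∃ r, a ≤ r ∧ r < b ∧ B r ≤ k ∧ k < B (r + 1) := by
  intro b hab
  induction b, hab using Nat.le_induction with
  | base => intro h; omega
  | succ b hab ih =>
    intro hk
    rcases Nat.lt_or_ge k (B b) with h | h
    · obtain ⟨r, h1, h2, h3, h4⟩ := ih h
      exact ⟨r, h1, by omega, h3, h4⟩
    · exact ⟨b, hab, by omega, h, hk⟩

/-- The row `r` has at most `r + 3` cells, and all dots of the rows `≤ r` lie in its columns, so at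
most two of these columns have their dot above the row `r`. -/
theorem few_above {n : ℕ} {B : ℕ → ℕ} (hB : Monotone B) {π : Equiv.Perm (Fin (n + 2))}
    (ht : Tr B π) {r : ℕ} (hr : r < n + 2) (hBr : B r ≤ r + 3) (h0 : r < π 0) (h1 : r < π 1)
    (hm : 2 ≤ B r) {c : Fin (n + 2)} (hc : (c : ℕ) < B r) (hrc : r < π c) : c = 0 ∨ c = 1 := by
  by_contra! hne
  set S := Finset.univ.filter (fun d => (π d : ℕ) ≤ r) with hS
  have hcard : S.card = r + 1 := by
    have : S.card = (Finset.Iic (⟨r, hr⟩ : Fin (n + 2))).card := by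
      refine Finset.card_equiv π fun d => ?_
      simp [hS, Fin.le_def]
    rw [this, Fin.card_Iic]
  have hmemS : ∀ d, d ∈ S ↔ (π d : ℕ) ≤ r := by simp [hS]
  have hcard2 : (insert 0 (insert 1 (insert c S))).card = r + 4 := by
    rw [Finset.card_insert_of_notMem, Finset.card_insert_of_notMem, Finset.card_insert_of_notMem,
      hcard]
    · rw [hmemS]; omega
    · rw [Finset.mem_insert, hmemS]
      rintro (h | h)
      · exact hne.2 h.symm
      · omega
    · rw [Finset.mem_insert, Finset.mem_insert, hmemS]
      rintro (h | h | h)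
      · simp at h
      · exact hne.1 h.symm
      · omega
  have hle : (insert 0 (insert 1 (insert c S))).card ≤ (range (B r)).card := by
    refine Finset.card_le_card_of_injOn (fun d => (d : ℕ)) ?_ (fun a _ b _ h => Fin.ext h)
    intro d hd
    simp only [Finset.coe_insert, Set.mem_insert_iff, Finset.mem_coe, hmemS] at hd
    simp only [Finset.coe_range, Set.mem_Iio]
    rcases hd with rfl | rfl | rfl | hd
    · rw [Fin.val_zero]; omega
    · rw [Fin.val_one]; omega
    · exact hc
    · exact lt_of_lt_of_le (ht d) (hB hd)
  rw [hcard2, Finset.card_range] at hle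
  omega

/-- No critical point of index `≥ 3`, in a form that is inherited by smaller diagrams. -/
def NoCrit (B : ℕ → ℕ) : Prop := ∀ r, B r < B (r + 1) → B r ≤ r + 3

/-- Without critical points of index `≥ 3` the converse of `phi_forward` holds: a pattern lost by
the shift would need a row of length at most `r + 3` below it, and `few_above` leaves no column for
its first dot. -/
theorem phi_backward_off {n : ℕ} {B : ℕ → ℕ} (hB : Monotone B) (h2 : 2 ≤ B 0) (hN : NoCrit B)
    {τ : Equiv.Perm (Fin (n + 2))} (ht : Tr B (Phi (n + 1) (B 0) τ))
    (ha : Av312 B (Phi (n + 1) (B 0) τ))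
    (hd : Phi (n + 1) (B 0) τ 1 < Phi (n + 1) (B 0) τ 0) : Av312off B τ := by
  obtain ⟨⟨-, h1⟩, h0T, htop⟩ := phi_backward hB h2 ht ha hd
  have hB0 : ∀ i, B 0 ≤ B i := fun i => hB (Nat.zero_le i)
  set T := lowset (B 0) τ with hT
  set π := Phi (n + 1) (B 0) τ with hπ
  have hS : IsShift T (shift T) := shift_spec T
  have hπτ : ∀ c, π c = shift T (τ c) := fun c => rfl
  have hπ0 : π 0 = τ 0 := Phi_zero τ
  have hmemτ : ∀ c, τ c ∈ T ↔ τ c < τ 0 ∧ (c : ℕ) < B 0 := fun c => mem_lowset'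
  have hmemπ : ∀ c, π c ∈ T ↔ τ c ∈ T := fun c => shift_mem_iff T (τ c)
  have hTlt : ∀ t ∈ T, t < τ 0 := fun t ht => (mem_lowset.1 ht).1
  have hnot : ∀ c, τ c ∉ T → π c = τ c := fun c hc => hS.fix _ hc
  have hτpos : ∀ c, c ≠ 1 → 0 < τ c := by
    intro c hc
    rw [Fin.pos_iff_ne_zero]
    exact fun e => hc (τ.injective (e.trans h1.symm))
  have hdown : ∀ c, c ≠ 1 → τ c ∈ T → π c < τ c := fun c hc hcT =>
    (hS.pred 0 h0T _ hcT (hτpos c hc)).2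
  have hbig : ∀ c, τ 0 < τ c → π c = τ c := fun c hc =>
    hnot c fun h => absurd (hTlt _ h) (not_lt.2 hc.le)
  have hge : ∀ c, ∀ s ∈ T, s < τ c → s ≤ π c := by
    intro c s hs hsc
    by_cases hc : τ c ∈ T
    · exact (hS.pred s hs _ hc hsc).1
    · rw [hnot c hc]; exact hsc.le
  intro i j k hi1 hj1 hk1 hij hjk h3 h4 h5
  have hj0 : j ≠ 0 := Fin.pos_iff_ne_zero.1 (lt_of_le_of_lt (Fin.zero_le i) hij)
  have hk0 : k ≠ 0 := Fin.pos_iff_ne_zero.1 (lt_of_le_of_lt (Fin.zero_le j) hjk)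
  -- an ascent `j, k` of `π` inside the diagram extends to a pattern of `π` that starts in column `0`,
  -- or in column `i` if its value is fixed by the shift
  have hfin : π j < π k → (π k = τ k ∨ π k ∈ T) → (k : ℕ) < B (π j) → False := by
    intro hp hq hr
    rcases hq with hq | hq
    · rcases lt_or_gt_of_ne (fun e => hk0 (τ.injective e) : τ k ≠ τ 0) with h | h
      · exact ha 0 j k (Fin.pos_iff_ne_zero.2 hj0) hjk hp (by rw [hπ0, hq]; exact h) hr
      · exact ha i j k hij hjk hp (by rw [hbig i (h.trans h4), hq]; exact h4) hr
    · exact ha 0 j k (Fin.pos_iff_ne_zero.2 hj0) hjk hp (by rw [hπ0]; exact hTlt _ hq) hr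
  have hkor : π k = τ k ∨ π k ∈ T := by
    by_cases hk : τ k ∈ T
    · exact Or.inr ((hmemπ k).2 hk)
    · exact Or.inl (hnot k hk)
  by_cases hjT : τ j ∈ T
  · have hπj := hdown j hj1 hjT
    have hjk' : τ j ≤ π k := hge k _ hjT h3
    rcases Nat.lt_or_ge (k : ℕ) (B (π j)) with hkB | hkB
    · exact hfin (hπj.trans_le hjk') hkor hkB
    · have hkT : τ k ∉ T := fun h => by
        have := ((hmemτ k).1 h).2
        have := hB0 (π j)
        omega
      have hπk := hnot k hkT
      obtain ⟨r, hr1, hr2, hr3, hr4⟩ := exists_jump hkB (τ j) (Fin.le_def.1 hπj.le) h5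
      have hBr := hN r (by omega)
      have hj1' : τ j ≤ π 1 := htop _ hjT
      have hr0 : r < π 0 := by
        rw [hπ0]; exact hr2.trans (Fin.lt_def.1 (hTlt _ hjT))
      have hr1' : r < π 1 := lt_of_lt_of_le hr2 (Fin.le_def.1 hj1')
      have hfew : ∀ c : Fin (n + 2), (c : ℕ) < B 0 → τ j ≤ π c → c = 0 ∨ c = 1 := by
        intro c hc hc'
        exact few_above hB ht (by have := (τ j).isLt; omega) hBr hr0 hr1' (h2.trans (hB0 r))
          (lt_of_lt_of_le hc (hB0 r)) (lt_of_lt_of_le hr2 (Fin.le_def.1 hc'))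
      by_cases hi0 : i = 0
      · rw [hi0] at h4
        rcases lt_trichotomy (π 1) (τ k) with h | h | h
        · refine ha 0 1 k (by simp [Fin.lt_def]) ?_ (by rw [hπk]; exact h)
            (by rw [hπ0, hπk]; exact h4) (lt_of_lt_of_le h5 (hB (Fin.le_def.1 hj1')))
          rw [Fin.lt_def, Fin.val_one]
          have : (k : ℕ) ≠ 0 := fun h' => hk0 (Fin.ext h')
          have : (k : ℕ) ≠ 1 := fun h' => hk1 (Fin.ext h')
          omega
        · exact hkT (h ▸ (hmemπ 1).2 (h1.symm ▸ h0T))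
        · obtain ⟨z, hz⟩ := τ.surjective (π 1)
          have hzT : τ z ∈ T := by rw [hz]; exact (hmemπ 1).2 (h1.symm ▸ h0T)
          rcases hfew z ((hmemτ z).1 hzT).2 (hge z _ hjT (by rw [hz]; exact h3.trans h)) with e | e
          · rw [e] at hzT
            exact absurd (hTlt _ hzT) (lt_irrefl _)
          · rw [e, h1] at hz
            rw [← hz] at h
            exact Fin.not_lt_zero _ h
      · have hiB : (i : ℕ) < B 0 := by
          have := ((hmemτ j).1 hjT).2
          rw [Fin.lt_def] at hij
          omega
        rcases hfew i hiB (hge i _ hjT (h3.trans h4)) with e | e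
        · exact hi0 e
        · exact hi1 e
  · have hπj := hnot j hjT
    have hkT : τ k ∉ T := by
      intro hkT
      refine hjT ((hmemτ j).2 ⟨h3.trans (hTlt _ hkT), ?_⟩)
      have := ((hmemτ k).1 hkT).2
      rw [Fin.lt_def] at hjk
      omega
    exact hfin (by rw [hπj, hnot k hkT]; exact h3) hkor (by rw [hπj]; exact h5)

/-- Deleting the lowest row and column `1` from transversals with their lowest dot in column `1`. -/
theorem cnt_off {n : ℕ} {B : ℕ → ℕ} (hB : Monotone B) (h0 : 2 ≤ B 0) (y : ℕ) :
    cnt (fun τ : Equiv.Perm (Fin (n + 2)) => ((Tr B τ ∧ Av312off B τ) ∧ y ≤ τ 0) ∧ τ 1 = 0) =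
      KK n (Bd B) (y - 1) := by
  rw [cnt_ins 1 0 (fun π => (Tr B π ∧ Av312off B π) ∧ y ≤ π 0), KK]
  refine cnt_congr fun σ => ?_
  rw [tr_ins hB, ins1_zero, Fin.val_one]
  have h1 : 1 < B 0 := h0
  have hk : ((1 : Fin (n + 2)) : ℕ) < B 0 := by rw [Fin.val_one]; exact h1
  have : Av312off B (ins 1 0 σ) ↔ Av312 (Bd B) σ := by
    constructor
    · intro ha a b c hab hbc h1 h2 h3
      refine ha _ _ _ (Fin.succAbove_ne 1 a) (Fin.succAbove_ne 1 b) (Fin.succAbove_ne 1 c)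
        ((sA_lt 1 _ _).2 hab) ((sA_lt 1 _ _).2 hbc) ((ins0_lt 1 _ _ _).2 h1)
        ((ins0_lt 1 _ _ _).2 h2) ?_
      rw [ins0_val, shape_iff hB 1 hk]
      exact h3
    · intro ha i j k hi hj hk' hij hjk h1 h2 h3
      obtain ⟨a, rfl⟩ := ne_cases _ _ hi
      obtain ⟨b, rfl⟩ := ne_cases _ _ hj
      obtain ⟨c, rfl⟩ := ne_cases _ _ hk'
      rw [sA_lt] at hij hjk
      rw [ins0_lt] at h1 h2
      rw [ins0_val, shape_iff hB 1 hk] at h3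
      exact ha a b c hij hjk h1 h2 h3
  rw [this]
  simp only [h1, true_and]
  refine and_congr_right fun _ => ?_
  omega

theorem cnt_desc_phi {n : ℕ} (B : ℕ → ℕ) (y : ℕ) :
    cnt (fun π : Equiv.Perm (Fin (n + 2)) => ((Tr B π ∧ Av312 B π) ∧ y ≤ π 0) ∧ ¬ π 0 < π 1) =
    cnt (fun τ => ((Tr B (Phi (n + 1) (B 0) τ) ∧ Av312 B (Phi (n + 1) (B 0) τ)) ∧ y ≤ τ 0) ∧
      Phi (n + 1) (B 0) τ 1 < Phi (n + 1) (B 0) τ 0) := by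
  symm
  refine cnt_equiv (Phi (n + 1) (B 0)) fun τ => ?_
  rw [Phi_zero]
  refine and_congr_right fun _ => ?_
  rw [not_lt]
  refine ⟨le_of_lt, fun h => lt_of_le_of_ne h fun e => ?_⟩
  rw [← Phi_zero (m := B 0)] at e
  simpa using (Phi (n + 1) (B 0) τ).injective e

/-- The injection `phi_forward`, counted. -/
theorem KK_desc_le {n : ℕ} {B : ℕ → ℕ} (hB : Monotone B) (h0 : 2 ≤ B 0) (y : ℕ) :
    KK n (Bd B) (y - 1) ≤
    cnt (fun π : Equiv.Perm (Fin (n + 2)) =>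
      ((Tr B π ∧ Av312 B π) ∧ y ≤ π 0) ∧ ¬ π 0 < π 1) := by
  rw [cnt_desc_phi, ← cnt_off hB h0]
  refine cnt_le id ?_ (fun _ _ _ _ h => h)
  rintro τ ⟨⟨⟨ht, ha⟩, hy⟩, h1⟩
  obtain ⟨h2, h3⟩ := phi_forward hB h0 ht ha h1
  exact ⟨⟨h2, hy⟩, h3⟩

theorem KK_desc_eq {n : ℕ} {B : ℕ → ℕ} (hB : Monotone B) (h0 : 2 ≤ B 0) (hN : NoCrit B) (y : ℕ) :
    cnt (fun π : Equiv.Perm (Fin (n + 2)) =>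
      ((Tr B π ∧ Av312 B π) ∧ y ≤ π 0) ∧ ¬ π 0 < π 1) = KK n (Bd B) (y - 1) := by
  refine le_antisymm ?_ (KK_desc_le hB h0 y)
  rw [cnt_desc_phi, ← cnt_off hB h0]
  refine cnt_le id ?_ (fun _ _ _ _ h => h)
  rintro τ ⟨⟨⟨ht, ha⟩, hy⟩, hd⟩
  obtain ⟨⟨h1, h2⟩, _⟩ := phi_backward hB h0 ht ha hd
  exact ⟨⟨⟨h1, phi_backward_off hB h0 hN ht ha hd⟩, hy⟩, h2⟩

/-! ### Comparison of 321 and 312 -/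

theorem NoCrit.del {B : ℕ → ℕ} (hB : Monotone B) (hN : NoCrit B) (y : ℕ) : NoCrit (Del y B) := by
  intro r hr
  have h1 := hB (Nat.le_succ r)
  have h2 := hN r
  have h3 := hN (r + 1)
  rcases lt_trichotomy (r + 1) y with h | h | h
  · have h4 : r < y := by omega
    simp only [Del, h, h4, if_true] at hr ⊢
    simp only [Nat.succ_eq_add_one] at *
    omega
  · have h4 : r < y := by omega
    have h5 : ¬ r + 1 < y := by omega
    simp only [Del, h5, h4, if_true, if_false] at hr ⊢
    simp only [Nat.succ_eq_add_one] at *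
    omega
  · have h4 : ¬ r < y := by omega
    have h5 : ¬ r + 1 < y := by omega
    simp only [Del, h5, h4, if_false] at hr ⊢
    omega

theorem KK_zero (B : ℕ → ℕ) (y : ℕ) : KK 0 B y = LL 0 B y := by
  refine cnt_congr fun π => ?_
  have h1 : Av312 B π := fun i j _ hij => by
    have := i.isLt
    have := j.isLt
    rw [Fin.lt_def] at hij
    omega
  have h2 : Av321 π := fun i j _ hij => by
    have := i.isLt
    have := j.isLt
    rw [Fin.lt_def] at hij
    omega
  simp [h1, h2]

theorem not_tr {n : ℕ} {B : ℕ → ℕ} (h : B 0 = 0) (π : Equiv.Perm (Fin (n + 1))) : ¬ Tr B π := by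
  intro ht
  have h1 := ht (π.symm 0)
  rw [Equiv.apply_symm_apply, Fin.val_zero, h] at h1
  omega

theorem KK_split {n : ℕ} (B : ℕ → ℕ) (y : ℕ) : KK (n + 1) B y =
    cnt (fun π : Equiv.Perm (Fin (n + 2)) => ((Tr B π ∧ Av312 B π) ∧ y ≤ π 0) ∧ π 0 < π 1) +
    cnt (fun π : Equiv.Perm (Fin (n + 2)) => ((Tr B π ∧ Av312 B π) ∧ y ≤ π 0) ∧ ¬ π 0 < π 1) :=
  cnt_split _ _

theorem LL_split {n : ℕ} (B : ℕ → ℕ) (y : ℕ) : LL (n + 1) B y =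
    cnt (fun π : Equiv.Perm (Fin (n + 2)) => ((Tr B π ∧ Av321 π) ∧ y ≤ π 0) ∧ π 0 < π 1) +
    cnt (fun π : Equiv.Perm (Fin (n + 2)) => ((Tr B π ∧ Av321 π) ∧ y ≤ π 0) ∧ ¬ π 0 < π 1) :=
  cnt_split _ _

/-- A diagram has at least as many `312`-avoiding as `321`-avoiding transversals (the latter
counted without regard to the shape). -/
theorem LL_le_KK : ∀ (n : ℕ) {B : ℕ → ℕ}, Monotone B → ∀ y, LL n B y ≤ KK n B y
  | 0, B, _, y => (KK_zero B y).ge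
  | n + 1, B, hB, y => by
    rcases Nat.eq_zero_or_pos (B 0) with h0 | h0
    · rw [LL, cnt_false fun π h => not_tr h0 π h.1.1]
      exact Nat.zero_le _
    rw [KK_split, LL_split, KK_asc hB h0, LL_asc hB h0]
    refine Nat.add_le_add (Finset.sum_le_sum fun z _ => ?_) ?_
    · split_ifs
      · exact LL_le_KK n (Del_mono hB z) z
      · exact le_rfl
    · rcases Nat.lt_or_ge (B 0) 2 with h2 | h2
      · rw [cnt_false fun π h => h.2 (desc_false h2 π h.1.1.1)]
        exact Nat.zero_le _
      · rw [LL_desc hB h2]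
        exact (LL_le_KK n (Bd_mono hB) _).trans (KK_desc_le hB h2 y)

/-- Without critical points of index `≥ 3` the two counts agree. -/
theorem KK_eq_LL : ∀ (n : ℕ) {B : ℕ → ℕ}, Monotone B → NoCrit B → ∀ y, KK n B y = LL n B y
  | 0, B, _, _, y => KK_zero B y
  | n + 1, B, hB, hN, y => by
    rcases Nat.eq_zero_or_pos (B 0) with h0 | h0
    · rw [LL, cnt_false fun π h => not_tr h0 π h.1.1, KK, cnt_false fun π h => not_tr h0 π h.1.1]
    rw [KK_split, LL_split, KK_asc hB h0, LL_asc hB h0]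
    congr 1
    · refine Finset.sum_congr rfl fun z _ => ?_
      rw [KK_eq_LL n (Del_mono hB z) (hN.del hB z) z]
    · rcases Nat.lt_or_ge (B 0) 2 with h2 | h2
      · rw [cnt_false fun π h => h.2 (desc_false h2 π h.1.1.1),
          cnt_false fun π h => h.2 (desc_false h2 π h.1.1.1)]
      · rw [LL_desc hB h2, KK_desc_eq hB h2 hN]
        refine KK_eq_LL n (Bd_mono hB) ?_ _
        rw [← Del_zero]
        exact hN.del hB 0

/-- The entries `2, 0, 4, 5, …, m, 1, 3, m + 1, m + 2, …` of the permutation witnessing strictness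
at a critical point of the lowest row, of length `m`. -/
def wit (m c : ℕ) : ℕ :=
  if c = 0 then 2 else if c = 1 then 0 else if c + 1 = m then 1 else if c = m then 3
  else if c < m then c + 2 else c

theorem exists_wit {n m : ℕ} (hm : 4 ≤ m) (hmn : m < n + 2) :
    ∃ τ : Equiv.Perm (Fin (n + 2)), ∀ c, (τ c : ℕ) = wit m c := by
  have hlt : ∀ c : Fin (n + 2), wit m c < n + 2 := by
    intro c
    have := c.isLt
    unfold wit
    split_ifs <;> omega
  have hinj : Function.Injective (fun c : Fin (n + 2) => (⟨wit m c, hlt c⟩ : Fin (n + 2))) := by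
    intro c d h
    have h' : wit m c = wit m d := congrArg Fin.val h
    unfold wit at h'
    apply Fin.ext
    split_ifs at h' <;> omega
  exact ⟨Equiv.ofBijective _ (Finite.injective_iff_bijective.1 hinj), fun c => rfl⟩

/-- `v` is the entry in column `c` of the image under `Phi` of the permutation `wit m`. -/
def WitVal (m c v : ℕ) : Prop :=
  (c = 0 ∧ v = 2) ∨ (c = 1 ∧ v = 1) ∨ (c + 1 = m ∧ v = 0) ∨ (c = m ∧ v = 3) ∨
    (2 ≤ c ∧ c + 1 < m ∧ v = c + 2) ∨ (m < c ∧ v = c)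

theorem shifted_wit {m i j k u v w : ℕ} (hm : 4 ≤ m) (hij : i < j) (hjk : j < k) (hj : j + 1 ≠ m)
    (hu : WitVal m i u) (hv : WitVal m j v) (hw : WitVal m k w) (hvw : v < w) (hwu : w < u) :
    False := by
  unfold WitVal at hu hv hw
  rcases hw with h | h | h | h | h | h <;> rcases hv with h' | h' | h' | h' | h' | h' <;>
    first | omega | (rcases hu with h'' | h'' | h'' | h'' | h'' | h'' <;> omega)

/-- A critical point of index `≥ 3` in the lowest row makes the injection behind `KK_desc_le`
miss a transversal. -/
theorem KK_desc_lt {n : ℕ} {B : ℕ → ℕ} (hB : Monotone B) (hn : ∀ i, B i ≤ n + 2)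
    (hp : Proper (n + 2) B) (h4 : 4 ≤ B 0) (h01 : B 0 < B 1) :
    KK n (Bd B) 0 <
    cnt (fun π : Equiv.Perm (Fin (n + 2)) =>
      ((Tr B π ∧ Av312 B π) ∧ 0 ≤ (π 0 : ℕ)) ∧ ¬ π 0 < π 1) := by
  have h2 : 2 ≤ B 0 := by omega
  have hmn : B 0 < n + 2 := lt_of_lt_of_le h01 (hn 1)
  obtain ⟨τ, hτ⟩ := exists_wit h4 hmn
  rw [cnt_desc_phi]
  have e := cnt_off (n := n) hB h2 0
  rw [Nat.zero_sub] at e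
  rw [← e]
  have hτ0 : (τ 0 : ℕ) = 2 := by rw [hτ]; simp [wit]
  have hτ1 : (τ 1 : ℕ) = 0 := by rw [hτ]; simp [wit]
  set l : Fin (n + 2) := ⟨B 0 - 1, by omega⟩ with hl
  have hlv : (l : ℕ) = B 0 - 1 := rfl
  have hτl : (τ l : ℕ) = 1 := by
    rw [hτ, hlv, wit]
    split_ifs <;> omega
  -- the low values of `τ` are `0` and `1`, so `Phi` swaps these two
  have hmem : ∀ c, τ c ∈ lowset (B 0) τ ↔ τ c < τ 0 ∧ (c : ℕ) < B 0 := fun c => mem_lowset'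
  have hS := shift_spec (lowset (B 0) τ)
  have h1T : τ 1 ∈ lowset (B 0) τ := (hmem 1).2 ⟨by rw [Fin.lt_def]; omega, by rw [Fin.val_one]; omega⟩
  have hlT : τ l ∈ lowset (B 0) τ := (hmem l).2 ⟨by rw [Fin.lt_def]; omega, by omega⟩
  have hle : ∀ t ∈ lowset (B 0) τ, (t : ℕ) ≤ 1 := by
    intro t ht
    have := Fin.lt_def.1 (mem_lowset.1 ht).1
    omega
  set π := Phi (n + 1) (B 0) τ with hπ
  have hπl : (π l : ℕ) = 0 := by
    have := Fin.lt_def.1 (hS.pred _ h1T _ hlT (by rw [Fin.lt_def]; omega)).2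
    rw [hπ, Phi_apply]
    omega
  have hπ1 : (π 1 : ℕ) = 1 := by
    have h5 := Fin.le_def.1 (hS.top _ h1T (fun t _ => by rw [Fin.le_def]; omega) _ hlT)
    have h6 := hle _ (hS.mem _ h1T)
    rw [hπ, Phi_apply]
    omega
  have hπc : ∀ c : Fin (n + 2), (c : ℕ) ≠ 1 → (c : ℕ) ≠ B 0 - 1 → (π c : ℕ) = wit (B 0) c := by
    intro c hc1 hcl
    rw [← hτ, hπ, Phi_apply, hS.fix]
    intro hc
    have h5 := hle _ hc
    rw [hτ, wit] at h5
    split_ifs at h5 <;> omega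
  have hspec : ∀ c : Fin (n + 2), WitVal (B 0) (c : ℕ) (π c : ℕ) := by
    intro c
    by_cases h8 : (c : ℕ) = 1
    · rw [show c = 1 from Fin.ext h8, hπ1]
      exact Or.inr (Or.inl ⟨Fin.val_one n, rfl⟩)
    by_cases h9 : (c : ℕ) = B 0 - 1
    · rw [show c = l from Fin.ext h9, hπl]
      exact Or.inr (Or.inr (Or.inl ⟨by omega, rfl⟩))
    · rw [hπc c h8 h9, wit, WitVal]
      split_ifs <;> omega
  refine cnt_lt id ?_ (fun _ _ _ _ h => h) τ ?_ ?_
  · rintro τ ⟨⟨⟨ht, ha⟩, hy⟩, h1⟩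
    obtain ⟨h2, h3⟩ := phi_forward hB h2 ht ha h1
    exact ⟨⟨h2, hy⟩, h3⟩
  · refine ⟨⟨⟨?_, ?_⟩, Nat.zero_le _⟩, ?_⟩
    · intro c
      change (c : ℕ) < B (π c)
      rcases lt_trichotomy (c : ℕ) (B 0) with hc | hc | hc
      · exact lt_of_lt_of_le hc (hB (Nat.zero_le _))
      · have h5 := hπc c (by omega) (by omega)
        have h6 : wit (B 0) c = 3 := by rw [wit]; split_ifs <;> omega
        rw [h5, h6, hc]
        exact lt_of_lt_of_le h01 (hB (by omega))
      · have h5 := hπc c (by omega) (by omega)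
        have h6 : wit (B 0) c = c := by rw [wit]; split_ifs <;> omega
        rw [h5, h6]
        exact hp c c.isLt
    · intro i j k hij hjk h5 h6 h7
      change π j < π k at h5
      change π k < π i at h6
      change (k : ℕ) < B (π j) at h7
      rw [Fin.lt_def] at hij hjk h5 h6
      -- only the dot in column `l` can be the lowest of a pattern, and row `0` ends at column `l`
      by_cases hj : (j : ℕ) = B 0 - 1
      · have : j = l := Fin.ext hj
        rw [this, hπl] at h7
        omega
      · have hk1 : (k : ℕ) ≠ 1 := by omega
        have hk : (k : ℕ) ≠ B 0 - 1 := by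
          intro h8
          rw [show k = l from Fin.ext h8, hπl] at h5
          omega
        exact shifted_wit h4 hij hjk (by omega) (hspec i) (hspec j) (hspec k) h5 h6
    · change π 1 < π 0
      rw [Fin.lt_def, hπ1, hπc 0 (by simp) (by rw [Fin.val_zero]; omega)]
      simp [wit]
  · rintro σ ⟨⟨⟨_, ha⟩, _⟩, _⟩ rfl
    have hτ2 : ∀ c : Fin (n + 2), (c : ℕ) = 2 → (σ c : ℕ) = 4 := by
      intro c hc
      have := hτ c
      rw [id] at this
      rw [this, wit]
      split_ifs <;> omega
    have hτm : ∀ c : Fin (n + 2), (c : ℕ) = B 0 → (σ c : ℕ) = 3 := by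
      intro c hc
      have := hτ c
      rw [id] at this
      rw [this, wit]
      split_ifs <;> omega
    have hl' : (σ l : ℕ) = 1 := hτl
    have hv2 := hτ2 ⟨2, by omega⟩ rfl
    have hvm := hτm ⟨B 0, hmn⟩ rfl
    refine ha ⟨2, by omega⟩ l ⟨B 0, hmn⟩ ?_ ?_ ?_ ?_ ?_ ?_ ?_ ?_
    · rw [Ne, Fin.ext_iff, Fin.val_one]; simp
    · rw [Ne, Fin.ext_iff, Fin.val_one]; omega
    · rw [Ne, Fin.ext_iff, Fin.val_one]; simp only; omega
    · rw [Fin.lt_def]; simp only; omega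
    · rw [Fin.lt_def]; simp only; omega
    · rw [Fin.lt_def]; omega
    · rw [Fin.lt_def]; omega
    · rw [hl']; exact h01

/-- A critical point of index `≥ 3` gives a strict inequality: it is moved down to the lowest row
by deleting a dot in the lower left corner, and `KK_desc_lt` applies there. -/
theorem LL_lt_KK : ∀ (n : ℕ) {B : ℕ → ℕ}, Monotone B → (∀ i, B i ≤ n + 1) → Proper (n + 1) B →
    Crit 4 (n + 1) B → LL n B 0 < KK n B 0
  | 0, B, _, _, _, hc => by obtain ⟨j, hj, -⟩ := hc; omega
  | n + 1, B, hB, hn, hp, hc => by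
    have h0 : 0 < B 0 := hp 0 (by omega)
    have hasc : ∀ z ∈ (Finset.univ : Finset (Fin (n + 2))),
        (if 0 ≤ (z : ℕ) then LL n (Del z B) z else 0) ≤
          (if 0 ≤ (z : ℕ) then KK n (Del z B) z else 0) := by
      intro z _
      split_ifs
      · exact LL_le_KK n (Del_mono hB z) z
      · exact le_rfl
    rw [KK_split, LL_split, KK_asc hB h0, LL_asc hB h0]
    obtain ⟨j, hj, h1, h2⟩ := hc
    rcases j with _ | j
    · refine Nat.add_lt_add_of_le_of_lt (Finset.sum_le_sum hasc) ?_
      rw [LL_desc hB (by omega)]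
      exact (LL_le_KK n (Bd_mono hB) _).trans_lt (KK_desc_lt hB hn hp (by omega) h1)
    · refine Nat.add_lt_add_of_lt_of_le (Finset.sum_lt_sum hasc ⟨0, Finset.mem_univ _, ?_⟩) ?_
      · simp only [Fin.val_zero, le_refl, if_true, Del_zero]
        refine LL_lt_KK n (Bd_mono hB) (Bd_le hn) hp.bd ⟨j, by omega, ?_, ?_⟩
        · simp only [Bd]; omega
        · simp only [Bd]; omega
      · rcases Nat.lt_or_ge (B 0) 2 with h2 | h2
        · rw [cnt_false fun π h => h.2 (desc_false h2 π h.1.1.1)]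
          exact Nat.zero_le _
        · rw [LL_desc hB h2]
          exact (LL_le_KK n (Bd_mono hB) _).trans (KK_desc_le hB h2 0)

/-! ### Reflection in the antidiagonal and translation of the definitions -/

/-- Avoidance of `213` inside the diagram `B`. -/
def Av213 {n : ℕ} (B : ℕ → ℕ) (π : Equiv.Perm (Fin n)) : Prop :=
  ∀ i j k, i < j → j < k → π j < π i → π i < π k → ¬ (k : ℕ) < B (π j)

/-- The diagrams `B` and `C` of size `n` are mirror images in the antidiagonal: the cell in column
`i` and row `h` corresponds to the cell in column `n - 1 - h` and row `n - 1 - i`. -/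
def Refl (n : ℕ) (B C : ℕ → ℕ) : Prop :=
  ∀ i h, i < n → h < n → (i < B h ↔ n - 1 - h < C (n - 1 - i))

theorem Refl.symm {n : ℕ} {B C : ℕ → ℕ} (h : Refl n B C) : Refl n C B := by
  intro i j hi hj
  have := h (n - 1 - j) (n - 1 - i) (by omega) (by omega)
  rw [show n - 1 - (n - 1 - i) = i by omega, show n - 1 - (n - 1 - j) = j by omega] at this
  exact this.symm

theorem Refl.crit {n s : ℕ} {B C : ℕ → ℕ} (h : Refl n B C) (hn : ∀ i, B i ≤ n) (hs : 1 ≤ s)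
    (hc : Crit s n B) : Crit s n C := by
  obtain ⟨j, hj, h1, h2⟩ := hc
  have hlt : B j < n := lt_of_lt_of_le h1 (hn _)
  have e1 := (h (B j) (j + 1) hlt hj).1 h1
  have e2 := mt (h (B j) j hlt (by omega)).2 (lt_irrefl _)
  have e3 := (h (B j - 1) j (by omega) (by omega)).1 (by omega)
  have e4 : n - 1 - (B j - 1) = n - 1 - B j + 1 := by omega
  rw [e4] at e3
  exact ⟨n - 1 - B j, by omega, by omega, by omega⟩

theorem Refl.proper {n : ℕ} {B C : ℕ → ℕ} (h : Refl n B C) (hp : Proper n B) : Proper n C := by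
  intro i hi
  have h1 := (h (n - 1 - i) (n - 1 - i) (by omega) (by omega)).1 (hp _ (by omega))
  rwa [show n - 1 - (n - 1 - i) = i by omega] at h1

/-- The row lengths of the mirror image of `B`. -/
def Mir (n : ℕ) (B : ℕ → ℕ) : ℕ → ℕ := fun h => ((range n).filter fun j => n ≤ B j + h).card

theorem Mir_mono (n : ℕ) (B : ℕ → ℕ) : Monotone (Mir n B) := by
  intro h k hk
  refine Finset.card_le_card fun j hj => ?_
  rw [Finset.mem_filter] at hj ⊢
  exact ⟨hj.1, by omega⟩

theorem Mir_le (n : ℕ) (B : ℕ → ℕ) (h : ℕ) : Mir n B h ≤ n :=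
  (Finset.card_filter_le _ _).trans (Finset.card_range n).le

theorem refl_Mir {n : ℕ} {B : ℕ → ℕ} (hB : Monotone B) : Refl n B (Mir n B) := by
  intro i h hi hh
  constructor
  · intro hlt
    have : (Finset.Ico h n).card ≤ Mir n B (n - 1 - i) := by
      refine Finset.card_le_card fun j hj => ?_
      rw [Finset.mem_Ico] at hj
      rw [Finset.mem_filter, Finset.mem_range]
      have := hB hj.1
      exact ⟨hj.2, by omega⟩
    rw [Nat.card_Ico] at this
    omega
  · intro hlt
    by_contra hge
    have : Mir n B (n - 1 - i) ≤ (Finset.Ioo h n).card := by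
      refine Finset.card_le_card fun j hj => ?_
      rw [Finset.mem_filter, Finset.mem_range] at hj
      rw [Finset.mem_Ioo]
      refine ⟨?_, hj.1⟩
      by_contra hjh
      have := hB (not_lt.1 hjh)
      omega
    rw [Nat.card_Ioo] at this
    omega

/-- The reflection of permutation matrices in the antidiagonal. -/
def mirPerm (n : ℕ) : Equiv.Perm (Fin n) ≃ Equiv.Perm (Fin n) where
  toFun π := Fin.revPerm.trans (π.symm.trans Fin.revPerm)
  invFun π := Fin.revPerm.trans (π.symm.trans Fin.revPerm)
  left_inv π := by ext; simp
  right_inv π := by ext; simp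

theorem mirPerm_apply {n : ℕ} (π : Equiv.Perm (Fin n)) (c : Fin n) :
    mirPerm n π (π c).rev = c.rev := by simp [mirPerm]

theorem rev_cases {n : ℕ} (π : Equiv.Perm (Fin n)) (a : Fin n) : ∃ c, a = (π c).rev :=
  ⟨π.symm a.rev, by simp⟩

theorem Refl.fin {n : ℕ} {B C : ℕ → ℕ} (h : Refl n B C) (i j : Fin n) :
    (i : ℕ) < B j ↔ (j.rev : ℕ) < C i.rev := by
  rw [h i j i.isLt j.isLt, Fin.val_rev, Fin.val_rev, Nat.sub_sub, Nat.sub_sub, Nat.add_comm 1,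
    Nat.add_comm 1]

theorem Refl.tr {n : ℕ} {B C : ℕ → ℕ} (h : Refl n B C) (π : Equiv.Perm (Fin n)) :
    Tr B π ↔ Tr C (mirPerm n π) := by
  constructor
  · intro ht a
    obtain ⟨c, rfl⟩ := rev_cases π a
    rw [mirPerm_apply, ← h.fin]
    exact ht c
  · intro ht c
    have := ht (π c).rev
    rwa [mirPerm_apply, ← h.fin] at this

theorem Refl.av123 {n : ℕ} {B C : ℕ → ℕ} (h : Refl n B C) (π : Equiv.Perm (Fin n)) :
    Av123 B π ↔ Av123 C (mirPerm n π) := by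
  constructor
  · intro ha x y z hxy hyz h1 h2 h3
    obtain ⟨k, rfl⟩ := rev_cases π x
    obtain ⟨j, rfl⟩ := rev_cases π y
    obtain ⟨i, rfl⟩ := rev_cases π z
    simp only [mirPerm_apply, Fin.rev_lt_rev, ← h.fin] at *
    exact ha i j k h2 h1 hyz hxy h3
  · intro ha i j k hij hjk h1 h2 h3
    have := ha (π k).rev (π j).rev (π i).rev
    simp only [mirPerm_apply, Fin.rev_lt_rev, ← h.fin] at this
    exact this h2 h1 hjk hij h3

theorem Refl.av213 {n : ℕ} {B C : ℕ → ℕ} (h : Refl n B C) (π : Equiv.Perm (Fin n)) :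
    Av213 B π ↔ Av132 C (mirPerm n π) := by
  constructor
  · intro ha x y z hxy hyz h1 h2 h3
    obtain ⟨k, rfl⟩ := rev_cases π x
    obtain ⟨i, rfl⟩ := rev_cases π y
    obtain ⟨j, rfl⟩ := rev_cases π z
    simp only [mirPerm_apply, Fin.rev_lt_rev, ← h.fin] at *
    exact ha i j k h2 h1 hyz hxy h3
  · intro ha i j k hij hjk h1 h2 h3
    have := ha (π k).rev (π i).rev (π j).rev
    simp only [mirPerm_apply, Fin.rev_lt_rev, ← h.fin] at this
    exact this h2 h1 hjk hij h3

theorem cnt123_eq {n : ℕ} {B : ℕ → ℕ} (hB : Monotone B) (hn : ∀ i, B i ≤ n) :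
    cnt (fun π : Equiv.Perm (Fin n) => Tr B π ∧ Av123 B π) = Hdp n B ∅ := by
  rw [← Hdp_eq n B hB hn ∅ (by simp)]
  exact cnt_congr fun π => by simp [Dec]

theorem cnt132_eq {n : ℕ} {B : ℕ → ℕ} (hB : Monotone B) (hn : ∀ i, B i ≤ n) :
    cnt (fun π : Equiv.Perm (Fin n) => Tr B π ∧ Av132 B π) = Gdp n B ∅ := by
  rw [← Gdp_eq n B hB hn ∅ (by simp)]
  exact cnt_congr fun π => by simp [Inc]

theorem cnt321_eq {n : ℕ} {B : ℕ → ℕ} (hB : Monotone B) (hn : ∀ i, B i ≤ n) :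
    cnt (fun π : Equiv.Perm (Fin n) => Tr B π ∧ Av321 π) = Ldp n B 0 := by
  rw [← Ldp_eq n B hB hn 0 (Nat.zero_le _)]
  exact cnt_congr fun π => by simp [IncUpTo]

theorem cnt213_lt_iff {n : ℕ} {B : ℕ → ℕ} (hB : Monotone B) (hn : ∀ i, B i ≤ n)
    (hp : Proper n B) :
    cnt (fun π : Equiv.Perm (Fin n) => Tr B π ∧ Av213 B π) <
      cnt (fun π : Equiv.Perm (Fin n) => Tr B π ∧ Av123 B π) ↔ Crit 3 n B := by
  have hR : Refl n B (Mir n B) := refl_Mir hB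
  rw [cnt_equiv (Q := fun π => Tr (Mir n B) π ∧ Av132 (Mir n B) π) (mirPerm n)
      fun π => and_congr (hR.tr π) (hR.av213 π),
    cnt_equiv (Q := fun π => Tr (Mir n B) π ∧ Av123 (Mir n B) π) (mirPerm n)
      fun π => and_congr (hR.tr π) (hR.av123 π),
    cnt132_eq (Mir_mono n B) (Mir_le n B), cnt123_eq (Mir_mono n B) (Mir_le n B),
    Gdp_lt_iff (Mir_mono n B) (Mir_le n B) (hR.proper hp)]
  exact ⟨hR.symm.crit (Mir_le n B) (by omega), hR.crit hn (by omega)⟩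

theorem cnt312_lt_iff {n : ℕ} {B : ℕ → ℕ} (hB : Monotone B) (hn : ∀ i, B i ≤ n)
    (hp : Proper n B) :
    cnt (fun π : Equiv.Perm (Fin n) => Tr B π ∧ Av123 B π) <
      cnt (fun π : Equiv.Perm (Fin n) => Tr B π ∧ Av312 B π) ↔ Crit 4 n B := by
  rw [cnt123_eq hB hn, Hdp_eq_Ldp hB hn, ← cnt321_eq hB hn]
  rcases n with _ | n
  · constructor
    · intro h
      rw [cnt_zero fun π => ⟨fun i => i.elim0, fun i => i.elim0⟩,
        cnt_zero fun π => ⟨fun i => i.elim0, fun i => i.elim0⟩] at h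
      omega
    · rintro ⟨j, hj, -⟩
      omega
  · have e1 : cnt (fun π : Equiv.Perm (Fin (n + 1)) => Tr B π ∧ Av321 π) = LL n B 0 :=
      cnt_congr fun π => by simp
    have e2 : cnt (fun π : Equiv.Perm (Fin (n + 1)) => Tr B π ∧ Av312 B π) = KK n B 0 :=
      cnt_congr fun π => by simp
    rw [e1, e2]
    refine ⟨fun h => ?_, LL_lt_KK n hB hn hp⟩
    by_contra hc
    refine h.ne' (KK_eq_LL n hB (fun r hr => ?_) 0)
    by_contra hlt
    refine hc ⟨r, ?_, hr, by omega⟩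
    -- from row `n` on all rows have full length
    by_contra hrn
    have h1 := hp n (by omega)
    have h2 := hB (show n ≤ r by omega)
    have h3 := hn (r + 1)
    omega

/-- The row lengths `b`, extended beyond the diagram by the value `n`. -/
def rowLen {n : ℕ} (b : Fin n → ℕ) : ℕ → ℕ := fun i => if h : i < n then b ⟨i, h⟩ else n

theorem rowLen_val {n : ℕ} (b : Fin n → ℕ) (i : Fin n) : rowLen b i = b i := by
  simp [rowLen]

theorem SYcard_eq {n k : ℕ} (b : Fin n → ℕ) (τ : Equiv.Perm (Fin k))
    (A : Equiv.Perm (Fin n) → Prop) (h : ∀ π, ContainsIn b π τ ↔ ¬ A π) :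
    SYcard b τ = cnt (fun π => Tr (rowLen b) π ∧ A π) := by
  classical
  rw [SYcard, Nat.card_eq_fintype_card, Fintype.card_subtype, cnt]
  congr 1
  ext π
  simp only [Finset.mem_filter, Finset.mem_univ, true_and, h, not_not, IsTransversal, Tr, rowLen_val,
    Nat.succ_le_iff]

/-- Three dots in the right relative order form a pattern in the diagram as soon as the last of
their columns meets a row `l` weakly below all of them. -/
theorem containsIn_of {n : ℕ} {b : Fin n → ℕ} (hb : Monotone b) {π : Equiv.Perm (Fin n)}
    {τ : Equiv.Perm (Fin 3)} {i j k l : Fin n} (hij : i < j) (hjk : j < k)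
    (ho : ∀ s t, τ s < τ t ↔ π (![i, j, k] s) < π (![i, j, k] t))
    (hl : ∀ t, l ≤ π (![i, j, k] t)) (hk : (k : ℕ) < b l) : ContainsIn b π τ := by
  refine ⟨![i, j, k], ?_, ho, fun s t => ?_⟩
  · intro s t hst
    have hik := hij.trans hjk
    fin_cases s <;> fin_cases t <;> simp_all
  · refine (Nat.succ_le_of_lt (lt_of_le_of_lt ?_ hk)).trans (hb (hl t))
    rw [Fin.lt_def] at hij hjk
    fin_cases s <;> simp <;> omega

theorem contains_p123 {n : ℕ} {b : Fin n → ℕ} (hb : Monotone b) (π : Equiv.Perm (Fin n)) :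
    ContainsIn b π p123 ↔ ¬ Av123 (rowLen b) π := by
  constructor
  · rintro ⟨f, hf, ho, hs⟩ ha
    refine ha (f 0) (f 1) (f 2) (hf (by decide)) (hf (by decide)) ((ho 0 1).1 (by decide))
      ((ho 1 2).1 (by decide)) ?_
    rw [rowLen_val]
    exact hs 2 0
  · intro ha
    unfold Av123 at ha
    push Not at ha
    obtain ⟨i, j, k, hij, hjk, h1, h2, h3⟩ := ha
    rw [rowLen_val] at h3
    have h12 := h1.trans h2
    refine containsIn_of hb hij hjk (fun s t => ?_) (fun t => ?_) h3
    · fin_cases s <;> fin_cases t <;> simp [p123, h1, h2, h12, h1.le, h2.le, h12.le]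
    · fin_cases t <;> simp [h1.le, h12.le]

theorem contains_p213 {n : ℕ} {b : Fin n → ℕ} (hb : Monotone b) (π : Equiv.Perm (Fin n)) :
    ContainsIn b π p213 ↔ ¬ Av213 (rowLen b) π := by
  constructor
  · rintro ⟨f, hf, ho, hs⟩ ha
    refine ha (f 0) (f 1) (f 2) (hf (by decide)) (hf (by decide)) ((ho 1 0).1 (by decide))
      ((ho 0 2).1 (by decide)) ?_
    rw [rowLen_val]
    exact hs 2 1
  · intro ha
    unfold Av213 at ha
    push Not at ha
    obtain ⟨i, j, k, hij, hjk, h1, h2, h3⟩ := ha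
    rw [rowLen_val] at h3
    have h12 := h1.trans h2
    refine containsIn_of hb hij hjk (fun s t => ?_) (fun t => ?_) h3
    · fin_cases s <;> fin_cases t <;> simp [p213, h1, h2, h12, h1.le, h2.le, h12.le]
    · fin_cases t <;> simp [h1.le, h12.le]

theorem contains_p312 {n : ℕ} {b : Fin n → ℕ} (hb : Monotone b) (π : Equiv.Perm (Fin n)) :
    ContainsIn b π p312 ↔ ¬ Av312 (rowLen b) π := by
  constructor
  · rintro ⟨f, hf, ho, hs⟩ ha
    refine ha (f 0) (f 1) (f 2) (hf (by decide)) (hf (by decide)) ((ho 1 2).1 (by decide))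
      ((ho 2 0).1 (by decide)) ?_
    rw [rowLen_val]
    exact hs 2 1
  · intro ha
    unfold Av312 at ha
    push Not at ha
    obtain ⟨i, j, k, hij, hjk, h1, h2, h3⟩ := ha
    rw [rowLen_val] at h3
    have h12 := h1.trans h2
    refine containsIn_of hb hij hjk (fun s t => ?_) (fun t => ?_) h3
    · fin_cases s <;> fin_cases t <;> simp [p312, h1, h2, h12, h1.le, h2.le, h12.le]
    · fin_cases t <;> simp [h1.le, h12.le]

theorem crit_rowLen {n s : ℕ} (b : Fin n → ℕ) : Crit s n (rowLen b) ↔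
    ∃ (j : ℕ) (h : j + 1 < n), b ⟨j, Nat.lt_of_succ_lt h⟩ < b ⟨j + 1, h⟩ ∧
      j + s ≤ b ⟨j, Nat.lt_of_succ_lt h⟩ := by
  refine exists_congr fun j => ?_
  rw [← exists_prop]
  refine exists_congr fun h => ?_
  simp only [rowLen, h, Nat.lt_of_succ_lt h, dite_true]

end ShapeWilf

open ShapeWilf in
theorem stmt1 (n : ℕ) (b : Fin n → ℕ) (hmono : Monotone b)
    (hb : ∀ y : Fin n, (y : ℕ) + 1 ≤ b y ∧ b y ≤ n) :
    (SYcard b p213 < SYcard b p123 ↔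
      ∃ (j : ℕ) (h : j + 1 < n), b ⟨j, Nat.lt_of_succ_lt h⟩ < b ⟨j + 1, h⟩ ∧
        j + 3 ≤ b ⟨j, Nat.lt_of_succ_lt h⟩) ∧
    (SYcard b p123 < SYcard b p312 ↔
      ∃ (j : ℕ) (h : j + 1 < n), b ⟨j, Nat.lt_of_succ_lt h⟩ < b ⟨j + 1, h⟩ ∧
        j + 4 ≤ b ⟨j, Nat.lt_of_succ_lt h⟩) := by
  have hn : ∀ i, rowLen b i ≤ n := by
    intro i
    unfold rowLen
    split_ifs with h
    · exact (hb _).2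
    · exact le_rfl
  have hB : Monotone (rowLen b) := by
    intro i j hij
    by_cases hj : j < n
    · have hi : i < n := lt_of_le_of_lt hij hj
      simp only [rowLen, hi, hj, dite_true]
      exact hmono hij
    · refine (hn i).trans ?_
      simp [rowLen, hj]
  have hp : Proper n (rowLen b) := by
    intro i hi
    simp only [rowLen, hi, dite_true]
    exact (hb ⟨i, hi⟩).1
  rw [SYcard_eq b p213 _ (contains_p213 hmono), SYcard_eq b p123 _ (contains_p123 hmono),
    SYcard_eq b p312 _ (contains_p312 hmono), ← crit_rowLen, ← crit_rowLen]
  exact ⟨cnt213_lt_iff hB hn hp, cnt312_lt_iff hB hn hp⟩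
end

section
/- Let α ∈ S_a, β ∈ S_b and γ ∈ S_c be permutations. If |S_W(α)| ≤ |S_W(β)| for every Young diagram W, then |S_Y(α|γ)| ≤ |S_Y(β|γ)| for every Young diagram Y. -/
/-!
Given a transversal `π`, call a cell white if some copy of `γ` inside the diagram lies strictly to
the right of and below it. White cells are closed under moving left and up, and for nonempty `τ` the
transversal contains `(τ|γ)` exactly when its white cells contain a copy of `τ`
(`contains_blockSum_iff`).

Moving the white dots around inside the white region does not change that region (`white_refill`):
a copy of `γ` chosen as far to the right as possible has no white dots. Hence the transversals
split into classes with the same white region and the same non-white dots (`whiteKey`). Deleting the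
rows and columns of the non-white dots turns the white region into a proper Young diagram `w`, and
the members of a class avoiding `(τ|γ)` correspond to the transversals of `w` avoiding `τ`
(`exists_diagram`). The hypothesis applied to each `w`, summed over classes, gives the inequality.

The argument needs nonempty patterns. If `α` is empty the claim is that avoiding `γ` implies
avoiding `(β|γ)`; if only `β` is empty, the hypothesis fails for the empty diagram.
-/

open Equiv

/-- The cell in column `i` and row `y` of the diagram `b` is *white* for `π` and `γ` if some copy of
`γ` in `π`, lying inside the diagram, has all its dots strictly to the right of and strictly below
the cell. -/
def White {n e : ℕ} (b : Fin n → ℕ) (γ : Equiv.Perm (Fin e)) (π : Equiv.Perm (Fin n))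
    (i y : Fin n) : Prop :=
  (i : ℕ) + 1 ≤ b y ∧ ∃ g : Fin e → Fin n, StrictMono g ∧
    (∀ s t : Fin e, γ s < γ t ↔ π (g s) < π (g t)) ∧
    (∀ s t : Fin e, (g s : ℕ) + 1 ≤ b (π (g t))) ∧
    ∀ s : Fin e, i < g s ∧ π (g s) < y

/-- The white region is closed under moving left and up, so it is again of Young diagram shape. -/
lemma White.mono {n e : ℕ} {b : Fin n → ℕ} (hmono : Monotone b) {γ : Equiv.Perm (Fin e)}
    {π : Equiv.Perm (Fin n)} {i y i' y' : Fin n} (hi : i' ≤ i) (hy : y ≤ y')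
    (h : White b γ π i y) : White b γ π i' y' := by
  obtain ⟨h1, g, hg, ho, hc, hs⟩ := h
  refine ⟨?_, g, hg, ho, hc, fun s => ⟨hi.trans_lt (hs s).1, (hs s).2.trans_le hy⟩⟩
  have := hmono hy
  have : (i' : ℕ) ≤ i := hi
  omega

/-- Rearranging the white dots within the white region leaves the white region unchanged: a
rightmost copy of `γ` witnessing whiteness consists of non-white dots only. -/
lemma white_refill {n e : ℕ} {b : Fin n → ℕ} (hmono : Monotone b) {γ : Equiv.Perm (Fin e)}
    {π₀ π : Equiv.Perm (Fin n)} (H1 : ∀ i, ¬ White b γ π₀ i (π₀ i) → π i = π₀ i)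
    (H2 : ∀ i, White b γ π₀ i (π₀ i) → White b γ π₀ i (π i)) (i y : Fin n) :
    White b γ π i y ↔ White b γ π₀ i y := by
  constructor
  · intro h
    by_contra hn
    obtain ⟨h1, g, hg, ho, hc, hs⟩ := h
    have key : ∀ s, π (g s) = π₀ (g s) := by
      intro s
      by_contra hne
      have hw : White b γ π₀ (g s) (π₀ (g s)) := by
        by_contra hw
        exact hne (H1 _ hw)
      exact hn (White.mono hmono (hs s).1.le (hs s).2.le (H2 _ hw))
    simp only [key] at ho hc hs
    exact hn ⟨h1, g, hg, ho, hc, hs⟩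
  · intro h
    induction hk : n - (i : ℕ) using Nat.strong_induction_on generalizing i y with
    | _ k ih =>
      obtain ⟨h1, g, hg, ho, hc, hs⟩ := h
      by_cases hall : ∀ s, ¬ White b γ π₀ (g s) (π₀ (g s))
      · have key : ∀ s, π₀ (g s) = π (g s) := fun s => (H1 _ (hall s)).symm
        simp only [key] at ho hc hs
        exact ⟨h1, g, hg, ho, hc, hs⟩
      · push Not at hall
        obtain ⟨s, hw⟩ := hall
        have hlt : (i : ℕ) < g s := (hs s).1
        have := (g s).isLt
        exact White.mono hmono (hs s).1.le (hs s).2.le (ih _ (by omega) _ _ hw rfl)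

lemma blockSum_castAdd {m k : ℕ} (σ : Equiv.Perm (Fin m)) (τ : Equiv.Perm (Fin k)) (s : Fin m) :
    (blockSum σ τ (Fin.castAdd k s) : ℕ) = k + σ s := by
  simp [blockSum, Nat.add_comm]

lemma blockSum_natAdd {m k : ℕ} (σ : Equiv.Perm (Fin m)) (τ : Equiv.Perm (Fin k)) (s : Fin k) :
    (blockSum σ τ (Fin.natAdd m s) : ℕ) = τ s := by
  simp [blockSum]

/-- The `γ`-part of a copy of `(τ|γ)`. -/
lemma ContainsIn.right {n k e : ℕ} {b : Fin n → ℕ} {γ : Equiv.Perm (Fin e)}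
    {π : Equiv.Perm (Fin n)} {τ : Equiv.Perm (Fin k)} (h : ContainsIn b π (blockSum τ γ)) :
    ContainsIn b π γ := by
  obtain ⟨f, hf, ho, hc⟩ := h
  refine ⟨fun s => f (Fin.natAdd k s), fun s t hst => hf (by simpa using hst), fun s t => ?_,
    fun s t => hc _ _⟩
  rw [← ho, Fin.lt_def, Fin.lt_def, blockSum_natAdd, blockSum_natAdd]

/-- For nonempty `τ`, a copy of `(τ|γ)` in the diagram is the same as a copy of `τ` in the white
region. -/
lemma contains_blockSum_iff {n k e : ℕ} (hk : 0 < k) {b : Fin n → ℕ} (hmono : Monotone b)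
    {γ : Equiv.Perm (Fin e)} {π : Equiv.Perm (Fin n)} {τ : Equiv.Perm (Fin k)} :
    ContainsIn b π (blockSum τ γ) ↔ ∃ f : Fin k → Fin n, StrictMono f ∧
      (∀ s t : Fin k, τ s < τ t ↔ π (f s) < π (f t)) ∧
      ∀ s t : Fin k, White b γ π (f s) (π (f t)) := by
  constructor
  · rintro ⟨f, hf, ho, hc⟩
    refine ⟨fun s => f (Fin.castAdd e s), fun s t hst => hf hst, fun s t => ?_,
      fun s t => ⟨hc _ _, fun s => f (Fin.natAdd k s), fun s t hst => hf (by simpa using hst),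
        fun s t => ?_, fun s t => hc _ _, fun u => ⟨hf ?_, (ho _ _).1 ?_⟩⟩⟩
    · rw [← ho, Fin.lt_def, Fin.lt_def, blockSum_castAdd, blockSum_castAdd]; omega
    · rw [← ho, Fin.lt_def, Fin.lt_def, blockSum_natAdd, blockSum_natAdd]
    · rw [Fin.lt_def]; simp; omega
    · rw [Fin.lt_def, blockSum_natAdd, blockSum_castAdd]; omega
  · rintro ⟨f, hf, ho, hw⟩
    have : Nonempty (Fin k) := ⟨⟨0, hk⟩⟩
    -- The corner cell: last column and lowest row of the copy of `τ`.
    obtain ⟨s₀, hs₀⟩ := Finite.exists_max f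
    obtain ⟨t₀, ht₀⟩ := Finite.exists_min (fun t => π (f t))
    obtain ⟨-, g, hg, hgo, hgc, hgs⟩ := hw s₀ t₀
    have hfg : ∀ s t, f s < g t := fun s t => (hs₀ s).trans_lt (hgs t).1
    have hgf : ∀ s t, π (g s) < π (f t) := fun s t => (hgs s).2.trans_le (ht₀ t)
    refine ⟨Fin.addCases f g, ?_, ?_, ?_⟩
    · intro s t hst
      induction s using Fin.addCases with
      | left s =>
        induction t using Fin.addCases with
        | left t => simpa using hf (show s < t from hst)
        | right t => simpa using hfg s t
      | right s =>
        induction t using Fin.addCases with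
        | left t => rw [Fin.lt_def] at hst; simp at hst; omega
        | right t => simpa using hg (by simpa using hst)
    · intro s t
      induction s using Fin.addCases with
      | left s =>
        induction t using Fin.addCases with
        | left t =>
          rw [Fin.lt_def, blockSum_castAdd, blockSum_castAdd]
          simpa using ho s t
        | right t =>
          rw [Fin.lt_def, blockSum_castAdd, blockSum_natAdd]
          have := (γ t).isLt
          simp only [Fin.addCases_left, Fin.addCases_right]
          exact iff_of_false (by omega) (hgf t s).not_gt
      | right s =>
        induction t using Fin.addCases with
        | left t =>
          rw [Fin.lt_def, blockSum_castAdd, blockSum_natAdd]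
          have := (γ s).isLt
          simp only [Fin.addCases_left, Fin.addCases_right]
          exact iff_of_true (by omega) (hgf s t)
        | right t =>
          rw [Fin.lt_def, blockSum_natAdd, blockSum_natAdd]
          simpa using hgo s t
    · intro s t
      induction s using Fin.addCases with
      | left s =>
        induction t using Fin.addCases with
        | left t => simpa using (hw s t).1
        | right t =>
          have h1 : (f s : ℕ) < g t := hfg s t
          have h2 := hgc t t
          simp only [Fin.addCases_left, Fin.addCases_right]
          omega
      | right s =>
        induction t using Fin.addCases with
        | left t =>
          have h1 := hmono (hgf s t).le
          have h2 := hgc s s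
          simp only [Fin.addCases_left, Fin.addCases_right]
          omega
        | right t => simpa using hgc s t

open Classical in
/-- The invariant that is kept fixed: the white region of `π`, together with the non-white dots of
`π` (the columns of white dots are sent to `none`). -/
noncomputable def whiteKey {n e : ℕ} (b : Fin n → ℕ) (γ : Equiv.Perm (Fin e))
    (π : Equiv.Perm (Fin n)) : (Fin n → Fin n → Prop) × (Fin n → Option (Fin n)) :=
  (White b γ π, fun i => if White b γ π i (π i) then none else some (π i))

/-- The transversals with the same invariant as `π₀` are the refillings of its white dots. -/
lemma whiteKey_eq_iff {n e : ℕ} {b : Fin n → ℕ} (hmono : Monotone b) {γ : Equiv.Perm (Fin e)}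
    {π₀ π : Equiv.Perm (Fin n)} (h₀ : IsTransversal b π₀) :
    (IsTransversal b π ∧ whiteKey b γ π = whiteKey b γ π₀) ↔
      (∀ i, ¬ White b γ π₀ i (π₀ i) → π i = π₀ i) ∧
        ∀ i, White b γ π₀ i (π₀ i) → White b γ π₀ i (π i) := by
  constructor
  · rintro ⟨-, hkey⟩
    have hW : White b γ π = White b γ π₀ := congrArg Prod.fst hkey
    have hP := fun i => congrFun (congrArg Prod.snd hkey) i
    simp only [whiteKey, hW] at hP
    constructor
    · intro i hi
      have := hP i
      by_cases h : White b γ π₀ i (π i) <;> simp_all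
    · intro i hi
      have := hP i
      by_contra h
      simp_all
  · rintro ⟨H1, H2⟩
    have hW : White b γ π = White b γ π₀ := by
      funext i y
      exact propext (white_refill hmono H1 H2 i y)
    refine ⟨fun i => ?_, ?_⟩
    · by_cases h : White b γ π₀ i (π₀ i)
      · exact (H2 i h).1
      · rw [H1 i h]; exact h₀ i
    · refine Prod.ext hW (funext fun i => ?_)
      have hi : White b γ π i (π i) ↔ White b γ π₀ i (π i) := by rw [hW]
      by_cases h : White b γ π₀ i (π₀ i)
      · simp [whiteKey, h, hi.2 (H2 i h)]
      · rw [H1 i h] at hi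
        simp [whiteKey, H1 i h, h, hi]

/-- Permutations agreeing with `π₀` off `C` correspond to permutations of `Fin m`, by listing the
columns `C` and their rows under `π₀` in increasing order. -/
lemma exists_refill_equiv {n : ℕ} (π₀ : Equiv.Perm (Fin n)) (C : Finset (Fin n)) :
    ∃ (m : ℕ) (col row : Fin m → Fin n), StrictMono col ∧ StrictMono row ∧
      (∀ i, i ∈ C ↔ ∃ j, col j = i) ∧ (∀ y, π₀.symm y ∈ C ↔ ∃ j, row j = y) ∧
      ∃ E : Equiv.Perm (Fin m) ≃ {π : Equiv.Perm (Fin n) // ∀ i, i ∉ C → π i = π₀ i},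
        ∀ σ j, (E σ).1 (col j) = row (σ j) := by
  classical
  let R : Finset (Fin n) := C.map π₀.toEmbedding
  have hR : R.card = C.card := Finset.card_map _
  have hmem : ∀ i, i ∈ C ↔ π₀ i ∈ R := by intro i; simp [R]
  let eC : Fin C.card ≃o C := C.orderIsoOfFin rfl
  let eR : Fin C.card ≃o R := R.orderIsoOfFin hR
  let p : C ≃ R := π₀.subtypeEquiv hmem
  let E1 : Equiv.Perm (Fin C.card) ≃ Equiv.Perm C :=
    Equiv.equivCongr eC.toEquiv (eR.toEquiv.trans p.symm)
  let E2 := Equiv.Perm.subtypeEquivSubtypePerm (fun i => i ∈ C)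
  let E3 : {f : Equiv.Perm (Fin n) // ∀ i, i ∉ C → f i = i} ≃
      {π : Equiv.Perm (Fin n) // ∀ i, i ∉ C → π i = π₀ i} :=
    (Equiv.mulLeft π₀).subtypeEquiv (by intro f; simp)
  refine ⟨C.card, fun j => eC j, fun j => eR j, fun i j h => eC.strictMono h,
    fun i j h => eR.strictMono h, ?_, ?_, (E1.trans E2).trans E3, ?_⟩
  · intro i
    constructor
    · intro hi
      exact ⟨eC.symm ⟨i, hi⟩, by simp⟩
    · rintro ⟨j, rfl⟩
      exact (eC j).2
  · intro y
    rw [hmem, Equiv.apply_symm_apply]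
    constructor
    · intro hi
      exact ⟨eR.symm ⟨y, hi⟩, by simp⟩
    · rintro ⟨j, rfl⟩
      exact (eR j).2
  · intro σ j
    have h1 : ((((E1.trans E2).trans E3) σ).1 (eC j)) = π₀ (E1 σ (eC j)) := by
      simp [E3, E2, Equiv.Perm.ofSubtype_apply_coe]
    have h2 : E1 σ (eC j) = p.symm (eR (σ j)) := by simp [E1, Equiv.equivCongr]
    have h3 : ∀ x : C, π₀ x = p x := fun x => rfl
    rw [h1, h2, h3, Equiv.apply_symm_apply]

/-- Each class of transversals with fixed invariant is governed by one Young diagram `w`: for every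
nonempty `τ`, its members avoiding `(τ|γ)` are counted by `|S_w(τ)|`. -/
lemma exists_diagram {n e : ℕ} {b : Fin n → ℕ} (hmono : Monotone b) (γ : Equiv.Perm (Fin e))
    {π₀ : Equiv.Perm (Fin n)} (h₀ : IsTransversal b π₀) :
    ∃ (m : ℕ) (w : Fin m → ℕ), Monotone w ∧ (∀ y : Fin m, (y : ℕ) + 1 ≤ w y ∧ w y ≤ m) ∧
      ∀ (k : ℕ) (_ : 0 < k) (τ : Equiv.Perm (Fin k)),
        Nat.card {π : Equiv.Perm (Fin n) // (IsTransversal b π ∧ ¬ ContainsIn b π (blockSum τ γ)) ∧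
          whiteKey b γ π = whiteKey b γ π₀} = SYcard w τ := by
  classical
  let C : Finset (Fin n) := Finset.univ.filter fun i => White b γ π₀ i (π₀ i)
  have hC : ∀ i, i ∈ C ↔ White b γ π₀ i (π₀ i) := by intro i; simp [C]
  obtain ⟨m, col, row, hcol, hrow, hcolC, hrowC, E, hE⟩ := exists_refill_equiv π₀ C
  let w : Fin m → ℕ := fun y =>
    (Finset.univ.filter fun j : Fin m => White b γ π₀ (col j) (row y)).card
  -- The white cells of a row form an initial segment, so the count `w` determines them.
  have hw : ∀ j y : Fin m, (j : ℕ) + 1 ≤ w y ↔ White b γ π₀ (col j) (row y) := by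
    intro j y
    constructor
    · intro hj
      by_contra hn
      have hsub : (Finset.univ.filter fun j : Fin m => White b γ π₀ (col j) (row y)) ⊆
          Finset.Iio j := by
        intro j' hj'
        rw [Finset.mem_filter] at hj'
        rw [Finset.mem_Iio]
        by_contra hle
        exact hn (White.mono hmono (hcol.monotone (not_lt.1 hle)) le_rfl hj'.2)
      have := Finset.card_le_card hsub
      rw [Fin.card_Iio] at this
      change (j : ℕ) + 1 ≤ Finset.card _ at hj
      omega
    · intro hj
      have hsub : Finset.Iic j ⊆
          (Finset.univ.filter fun j : Fin m => White b γ π₀ (col j) (row y)) := by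
        intro j' hj'
        rw [Finset.mem_Iic] at hj'
        rw [Finset.mem_filter]
        exact ⟨Finset.mem_univ _, White.mono hmono (hcol.monotone hj') le_rfl hj⟩
      have := Finset.card_le_card hsub
      rwa [Fin.card_Iic] at this
  have hwmono : Monotone w := by
    intro y y' hy
    refine Finset.card_le_card fun j hj => ?_
    rw [Finset.mem_filter] at hj ⊢
    exact ⟨hj.1, White.mono hmono le_rfl (hrow.monotone hy) hj.2⟩
  have hmem : ∀ σ, (∀ i, White b γ π₀ i (π₀ i) → White b γ π₀ i ((E σ).1 i)) ↔
      IsTransversal w σ := by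
    intro σ
    constructor
    · intro H j
      rw [hw, ← hE]
      exact H _ ((hC _).1 ((hcolC _).2 ⟨j, rfl⟩))
    · intro H i hi
      obtain ⟨j, rfl⟩ := (hcolC i).1 ((hC i).2 hi)
      rw [hE, ← hw]
      exact H j
  have hfix : ∀ σ i, ¬ White b γ π₀ i (π₀ i) → (E σ).1 i = π₀ i :=
    fun σ i hi => (E σ).2 i (fun h => hi ((hC i).1 h))
  refine ⟨m, w, hwmono, fun y => ⟨?_, ?_⟩, ?_⟩
  · -- The dots of the restriction of `π₀` in rows up to `y` occupy `y + 1` columns below `w y`.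
    let σ₀ := E.symm ⟨π₀, fun _ _ => rfl⟩
    have hσ₀ : IsTransversal w σ₀ := by
      rw [← hmem]
      intro i hi
      simpa [σ₀] using hi
    have hsub : (Finset.Iic y).map σ₀.symm.toEmbedding ⊆
        (Finset.univ.filter fun j : Fin m => White b γ π₀ (col j) (row y)) := by
      intro j hj
      rw [Finset.mem_map_equiv, Equiv.symm_symm, Finset.mem_Iic] at hj
      rw [Finset.mem_filter, ← hw]
      exact ⟨Finset.mem_univ _, (hσ₀ j).trans (hwmono hj)⟩
    have := Finset.card_le_card hsub
    rwa [Finset.card_map, Fin.card_Iic] at this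
  · exact (Finset.card_le_univ _).trans (by simp)
  · intro k hk τ
    have hcont : ∀ σ, IsTransversal w σ →
        (ContainsIn b (E σ).1 (blockSum τ γ) ↔ ContainsIn w σ τ) := by
      intro σ hσ
      have hW := white_refill hmono (hfix σ) ((hmem σ).2 hσ)
      rw [contains_blockSum_iff hk hmono]
      constructor
      · rintro ⟨f, hf, ho, hfw⟩
        -- All dots of the copy are white, hence lie in the listed columns.
        have hex : ∀ s, ∃ j, col j = f s := by
          intro s
          rw [← hcolC, hC]
          by_contra hn
          have := (hW _ _).1 (hfw s s)
          rw [hfix σ _ hn] at this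
          exact hn this
        choose f' hf' using hex
        obtain rfl : (fun s => col (f' s)) = f := funext hf'
        refine ⟨f', fun s t hst => hcol.lt_iff_lt.1 (hf hst), fun s t => ?_, fun s t => ?_⟩
        · rw [ho, hE, hE, hrow.lt_iff_lt]
        · rw [hw, ← hE, ← hW]
          exact hfw s t
      · rintro ⟨f', hf', ho, hc⟩
        refine ⟨fun s => col (f' s), fun s t hst => hcol (hf' hst), fun s t => ?_, fun s t => ?_⟩
        · rw [ho, hE, hE, hrow.lt_iff_lt]
        · rw [hW, hE, ← hw]
          exact hc s t
    symm
    refine Nat.card_eq_of_bijective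
      (fun σ => ⟨(E σ.1).1, ?_⟩) ⟨?_, ?_⟩
    · have h1 := (whiteKey_eq_iff hmono h₀).2 ⟨hfix σ.1, (hmem σ.1).2 σ.2.1⟩
      exact ⟨⟨h1.1, fun h => σ.2.2 ((hcont _ σ.2.1).1 h)⟩, h1.2⟩
    · intro σ σ' h
      simp only [Subtype.mk.injEq] at h
      exact Subtype.ext (E.injective (Subtype.ext h))
    · rintro ⟨π, ⟨ht, hn⟩, hkey⟩
      obtain ⟨H1, H2⟩ := (whiteKey_eq_iff hmono h₀).1 ⟨ht, hkey⟩
      obtain ⟨σ, hσ⟩ := E.surjective ⟨π, fun i hi => H1 i (fun h => hi ((hC i).2 h))⟩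
      have hσ' : (E σ).1 = π := congrArg Subtype.val hσ
      have hσt : IsTransversal w σ := by
        rw [← hmem, hσ']
        exact H2
      refine ⟨⟨σ, hσt, fun h => hn ?_⟩, Subtype.ext hσ'⟩
      rw [← hσ']
      exact (hcont σ hσt).2 h

theorem stmt2 (a c e : ℕ) (α : Equiv.Perm (Fin a)) (β : Equiv.Perm (Fin c))
    (γ : Equiv.Perm (Fin e))
    (h : ∀ (m : ℕ) (w : Fin m → ℕ), Monotone w →
      (∀ y : Fin m, (y : ℕ) + 1 ≤ w y ∧ w y ≤ m) → SYcard w α ≤ SYcard w β)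
    (n : ℕ) (b : Fin n → ℕ) (hmono : Monotone b)
    (hb : ∀ y : Fin n, (y : ℕ) + 1 ≤ b y ∧ b y ≤ n) :
    SYcard b (blockSum α γ) ≤ SYcard b (blockSum β γ) := by
  classical
  rcases Nat.eq_zero_or_pos a with rfl | ha
  · -- `(α|γ)` is `γ` itself, and a transversal avoiding `γ` avoids `(β|γ)`.
    refine Nat.card_le_card_of_injective
      (fun π => ⟨π.1, π.2.1, fun hc => π.2.2 ?_⟩) ?_
    · obtain ⟨g, hg, ho, hc⟩ := ContainsIn.right hc
      refine ⟨fun s => g (Fin.cast (Nat.zero_add e) s), fun s t hst => hg hst, fun s t => ?_,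
        fun s t => hc _ _⟩
      have hcast : ∀ s, (blockSum α γ s : ℕ) = γ (Fin.cast (Nat.zero_add e) s) := by
        intro s
        rw [← blockSum_natAdd α γ]
        congr 2
        ext
        simp
      rw [← ho, Fin.lt_def, Fin.lt_def, hcast, hcast]
    · intro π π' hπ
      simp only [Subtype.mk.injEq] at hπ
      exact Subtype.ext hπ
  rcases Nat.eq_zero_or_pos c with rfl | hc
  · -- The empty diagram rules this out: it avoids the nonempty `α` but contains the empty `β`.
    exfalso
    have h0 := h 0 (fun _ => 0) (fun _ _ _ => le_rfl) (fun y => y.elim0)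
    have hβ : SYcard (n := 0) (fun _ => 0) β = 0 := by
      have : IsEmpty {π : Equiv.Perm (Fin 0) //
          IsTransversal (fun _ => 0) π ∧ ¬ ContainsIn (fun _ => 0) π β} :=
        ⟨fun π => π.2.2 ⟨fun s => s.elim0, fun s => s.elim0, fun s => s.elim0,
          fun s => s.elim0⟩⟩
      exact Nat.card_of_isEmpty
    have hα : 0 < SYcard (n := 0) (fun _ => 0) α := by
      have : Nonempty {π : Equiv.Perm (Fin 0) //
          IsTransversal (fun _ => 0) π ∧ ¬ ContainsIn (fun _ => 0) π α} :=
        ⟨⟨1, fun i => i.elim0, fun ⟨f, _⟩ => (f ⟨0, ha⟩).elim0⟩⟩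
      exact Nat.card_pos
    omega
  have hcard : ∀ {k : ℕ} (τ : Equiv.Perm (Fin k)), SYcard b (blockSum τ γ) =
      ∑ κ, Nat.card {π : Equiv.Perm (Fin n) //
        (IsTransversal b π ∧ ¬ ContainsIn b π (blockSum τ γ)) ∧ whiteKey b γ π = κ} := by
    intro k τ
    unfold SYcard
    rw [Nat.card_eq_fintype_card, Fintype.card_subtype,
      Finset.card_eq_sum_card_fiberwise (f := whiteKey b γ) (t := Finset.univ) (by simp)]
    refine Finset.sum_congr rfl fun κ _ => ?_
    rw [Nat.card_eq_fintype_card, Fintype.card_subtype, Finset.filter_filter]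
  rw [hcard, hcard]
  refine Finset.sum_le_sum fun κ _ => ?_
  by_cases hκ : ∃ π₀, IsTransversal b π₀ ∧ whiteKey b γ π₀ = κ
  · obtain ⟨π₀, h₀, rfl⟩ := hκ
    obtain ⟨m, w, hwm, hwb, hw⟩ := exists_diagram hmono γ h₀
    rw [hw a ha α, hw c hc β]
    exact h m w hwm hwb
  · have : IsEmpty {π : Equiv.Perm (Fin n) //
        (IsTransversal b π ∧ ¬ ContainsIn b π (blockSum α γ)) ∧ whiteKey b γ π = κ} :=
      ⟨fun π => hκ ⟨π.1, π.2.1.1, π.2.2⟩⟩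
    rw [Nat.card_of_isEmpty]
    exact Nat.zero_le _
end
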